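/- arXiv:2605.03347 — 2 statements merged into one kernel-verified Lean document; each statement's English description precedes it below -/
import Mathlib

section
/- Let G be a forest (a finite simple graph with no cycles) on vertex set {1,…,n} with at least one edge, K a field, and I(G) ⊆ K[x_1,…,x_n] its edge ideal. Then reg(I(G)) = ν′(G) + 1, where ν′(G) is the induced matching number of G. -/
/-!
The proof works with the Koszul complex `K(x; R)` over `R = K[x_1,…,x_n]`, whose chains are
functions `Finset (Fin n) → R`. Squarefree monomial ideals are encoded by the family of supports of
their monomials, so that sums with and colons by a variable become operations on families of finsets
and the homology of `R/I` is described by chains over `R` modulo chains with coefficients in `I`.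
Multiplication by `x_v` is null-homotopic through left multiplication by `e_v` (`kd_wedge`).

*Upper bound.* The chase in `0 → R/(I : x_v)(-1) → R/I → R/(I + x_v) → 0` gives
`reg R/I ≤ max (reg R/(I : x_v) + 1, reg R/(I + x_v))` (`Vanish.of_colon`), and if `x_v` is a
nonzerodivisor on `R/I` the first term may be dropped (`Vanish.of_nonzerodivisor`). For the edge
ideal of an induced subgraph of a forest, let `v` be the neighbour of a leaf `u`. The colon ideal
belongs to the deletion of `N(v)`, and every induced matching there extends by the edge `uv`, so
induction gives `reg R/I(G) ≤ ν'(G)` (`vanish_forest`). The edgeless case is the exactness of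
`K(x; R)`, which transfers the bound to `reg I(G) ≤ ν'(G) + 1` (`bettiIdeal_eq_zero_of_vanish`).

*Lower bound.* For an induced matching `M` with edges `u_k v_k`, the product `y` of the chains
`x_{u_k} e_{v_k}` is a cycle modulo `I(G)`, and `dy` is a cycle with coefficients in `I(G)` of
homological degree `|M| - 1` and internal degree `2|M|`. By induction on `|M|`, using the connecting
map of `0 → R/I_M(-2) → R/I_M → R/I_{M ∪ uv} → 0`, it does not bound
(`exists_matching_chain`); only multidegrees supported on the vertices of `M` matter, and there
`I(G)` agrees with `I_M` because `M` is induced.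
-/


open MvPolynomial

/-- The Koszul differential on the Koszul complex of the variables `x_1,…,x_n` with
coefficients in an `R = K[x_1,…,x_n]`-module `M` (all homological degrees combined):
`(d f) T = ∑_{l ∉ T} (-1)^{#{m ∈ T : m < l}} x_l • f (T ∪ {l})`. -/
noncomputable def koszulD (K : Type*) [Field K] (n : ℕ) (M : Type*) [AddCommGroup M]
    [Module (MvPolynomial (Fin n) K) M] [Module K M]
    [IsScalarTower K (MvPolynomial (Fin n) K) M] :
    (Finset (Fin n) → M) →ₗ[K] (Finset (Fin n) → M) where
  toFun f T := ∑ l ∈ Tᶜ,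
    ((-1 : ℤ) ^ (T.filter (· < l)).card) • ((X l : MvPolynomial (Fin n) K) • f (insert l T))
  map_add' f g := by
    funext T
    simp [Pi.add_apply, smul_add, Finset.sum_add_distrib]
  map_smul' c f := by
    funext T
    simp only [Pi.smul_apply, RingHom.id_apply, Finset.smul_sum]
    refine Finset.sum_congr rfl fun l _ => ?_
    rw [smul_comm (X l : MvPolynomial (Fin n) K) c (f (insert l T)),
      smul_comm ((-1 : ℤ) ^ (T.filter (· < l)).card) c]

/-- The piece of the Koszul complex in homological degree `i` and internal degree `j`,
where `V : ℤ → Submodule K M` records the graded pieces of `M` (the exterior generator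
`e_S`, `|S| = i`, has internal degree `i`, so its coefficient lies in degree `j - i`). -/
noncomputable def koszulPart (K : Type*) [Field K] (n : ℕ) (M : Type*) [AddCommGroup M]
    [Module K M] (V : ℤ → Submodule K M) (i : ℕ) (j : ℤ) :
    Submodule K (Finset (Fin n) → M) where
  carrier := {f | ∀ S : Finset (Fin n), if S.card = i then f S ∈ V (j - i) else f S = 0}
  add_mem' := by
    intro a b ha hb S
    have h1 := ha S
    have h2 := hb S
    by_cases h : S.card = i <;> simp_all [Pi.add_apply, Submodule.add_mem]
  zero_mem' := by
    intro S
    by_cases h : S.card = i <;> simp [h]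
  smul_mem' := by
    intro c a ha S
    have h1 := ha S
    by_cases h : S.card = i <;> simp_all [Pi.smul_apply, Submodule.smul_mem]

/-- The graded Betti number `β_{i,j}(M) = dim_K Tor_i(M, K)_j` — the number of degree-`j`
generators of the `i`-th module in the minimal graded free resolution of the graded module
`M` with graded pieces `V` — computed as the dimension of the degree-`j` part of the `i`-th
Koszul homology of `M`. -/
noncomputable def gradedBetti (K : Type*) [Field K] (n : ℕ) (M : Type*) [AddCommGroup M]
    [Module (MvPolynomial (Fin n) K) M] [Module K M]
    [IsScalarTower K (MvPolynomial (Fin n) K) M]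
    (V : ℤ → Submodule K M) (i : ℕ) (j : ℤ) : ℕ :=
  let Z : Submodule K (Finset (Fin n) → M) :=
    LinearMap.ker (koszulD K n M) ⊓ koszulPart K n M V i j
  let B : Submodule K (Finset (Fin n) → M) :=
    Submodule.map (koszulD K n M) (koszulPart K n M V (i + 1) j)
  Module.finrank K (Z ⧸ (B.comap Z.subtype))

/-- The degree-`j` graded piece of `R/J`, for homogeneous `J`. -/
noncomputable def quotGrading (K : Type*) [Field K] (n : ℕ)
    (J : Ideal (MvPolynomial (Fin n) K)) (j : ℤ) :
    Submodule K ((MvPolynomial (Fin n) K) ⧸ J) :=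
  if 0 ≤ j then
    Submodule.map ((J.mkQ).restrictScalars K) (homogeneousSubmodule (Fin n) K j.toNat)
  else ⊥

/-- The degree-`j` graded piece of a homogeneous ideal `I ⊆ R`. -/
noncomputable def idealGrading (K : Type*) [Field K] (n : ℕ)
    (I : Ideal (MvPolynomial (Fin n) K)) (j : ℤ) :
    Submodule K (MvPolynomial (Fin n) K) :=
  if 0 ≤ j then (Submodule.restrictScalars K I) ⊓ homogeneousSubmodule (Fin n) K j.toNat
  else ⊥

/-- The graded Betti numbers `β_{i,j}(R/J)`. -/
noncomputable def bettiQuot (K : Type*) [Field K] (n : ℕ)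
    (J : Ideal (MvPolynomial (Fin n) K)) (i : ℕ) (j : ℤ) : ℕ :=
  gradedBetti K n ((MvPolynomial (Fin n) K) ⧸ J) (quotGrading K n J) i j

/-- The graded Betti numbers `β_{i,j}(I)` of a homogeneous ideal `I ⊆ R`. -/
noncomputable def bettiIdeal (K : Type*) [Field K] (n : ℕ)
    (I : Ideal (MvPolynomial (Fin n) K)) (i : ℕ) (j : ℤ) : ℕ :=
  gradedBetti K n (MvPolynomial (Fin n) K) (idealGrading K n I) i j

/-- The projective dimension of `R/J`: the length of its minimal graded free resolution,
i.e. the largest homological degree `i` with `β_{i,j}(R/J) ≠ 0` for some `j`. -/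
noncomputable def pdQuot (K : Type*) [Field K] (n : ℕ)
    (J : Ideal (MvPolynomial (Fin n) K)) : ℕ :=
  sSup {i : ℕ | ∃ j : ℤ, bettiQuot K n J i j ≠ 0}

/-- The Castelnuovo–Mumford regularity of a homogeneous ideal `I ⊆ R`:
`reg(I) = max{ j - i : β_{i,j}(I) ≠ 0 }`. -/
noncomputable def regIdeal (K : Type*) [Field K] (n : ℕ)
    (I : Ideal (MvPolynomial (Fin n) K)) : ℤ :=
  sSup {d : ℤ | ∃ (i : ℕ) (j : ℤ), bettiIdeal K n I i j ≠ 0 ∧ d = j - (i : ℤ)}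

/-- The edge ideal `I(G) = (x_u x_v : {u,v} ∈ E(G)) ⊆ K[x_1,…,x_n]`. -/
noncomputable def edgeIdeal (K : Type*) [Field K] {n : ℕ} (G : SimpleGraph (Fin n)) :
    Ideal (MvPolynomial (Fin n) K) :=
  Ideal.span {p | ∃ u v : Fin n, G.Adj u v ∧ p = X u * X v}

/-- The cover ideal `J(G) = ⋂_{{u,v} ∈ E(G)} (x_u, x_v) ⊆ K[x_1,…,x_n]`. -/
noncomputable def coverIdeal (K : Type*) [Field K] {n : ℕ} (G : SimpleGraph (Fin n)) :
    Ideal (MvPolynomial (Fin n) K) :=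
  ⨅ (u : Fin n) (v : Fin n) (_ : G.Adj u v), Ideal.span {X u, X v}

/-- `M` is an induced matching in `G`: a set of edges of `G`, pairwise vertex-disjoint,
such that every edge of `G` both of whose endpoints are covered by `M` belongs to `M`
(i.e. the subgraph induced on the covered vertices is exactly the disjoint edges of `M`). -/
def IsInducedMatching {V : Type*} (G : SimpleGraph V) (M : Finset (Sym2 V)) : Prop :=
  (↑M ⊆ G.edgeSet) ∧
  (∀ e ∈ M, ∀ f ∈ M, e ≠ f → ∀ v : V, v ∈ e → v ∉ f) ∧
  (∀ e ∈ G.edgeSet, (∀ v ∈ e, ∃ f ∈ M, v ∈ f) → e ∈ M)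

/-- The induced matching number `ν'(G)`: the maximum size of an induced matching in `G`. -/
noncomputable def inducedMatchingNumber {V : Type*} (G : SimpleGraph V) : ℕ :=
  sSup {k : ℕ | ∃ M : Finset (Sym2 V), IsInducedMatching G M ∧ M.card = k}

/-! ### The Koszul complex of the polynomial ring -/

section Chains

variable {K : Type*} [Field K] {n : ℕ}

/-- The sign `(-1)^{#{m ∈ T : m < l}}` of the Koszul differential. -/
def koszulSign {n : ℕ} (T : Finset (Fin n)) (l : Fin n) : ℤ := (-1) ^ (T.filter (· < l)).card

lemma koszulSign_sq (T : Finset (Fin n)) (l : Fin n) : koszulSign T l * koszulSign T l = 1 := by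
  unfold koszulSign
  rw [← pow_add, ← two_mul, pow_mul]
  simp

lemma koszulSign_insert {C : Finset (Fin n)} {v : Fin n} (hv : v ∉ C) (l : Fin n) :
    koszulSign (insert v C) l = if v < l then -koszulSign C l else koszulSign C l := by
  unfold koszulSign
  rw [Finset.filter_insert]
  split_ifs with h
  · rw [Finset.card_insert_of_notMem (by simp [hv]), pow_succ]
    ring
  · rfl

/-- The sign rule behind both `d² = 0` and the homotopy formula: the two orders in which
`l` and `v` can be adjoined to `C` contribute opposite signs. -/
lemma koszulSign_swap {C : Finset (Fin n)} {v l : Fin n} (hv : v ∉ C) (hl : l ∉ C) (h : v ≠ l) :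
    koszulSign (insert v C) l * koszulSign C v = -(koszulSign (insert l C) v * koszulSign C l) := by
  rw [koszulSign_insert hv, koszulSign_insert hl]
  rcases lt_or_gt_of_ne h with h1 | h1
  · rw [if_pos h1, if_neg h1.not_gt]
    ring
  · rw [if_neg h1.not_gt, if_pos h1]
    ring

/-- Chains of the Koszul complex `K(x_1,…,x_n; R)` over the polynomial ring `R`; the value at `S`
is the coefficient of the exterior generator `e_S`. -/
abbrev Chain (K : Type*) [Field K] (n : ℕ) : Type _ := Finset (Fin n) → MvPolynomial (Fin n) K

/-- The Koszul differential on `K(x_1,…,x_n; R)`. -/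
noncomputable abbrev kd : Chain K n →ₗ[K] Chain K n := koszulD K n (MvPolynomial (Fin n) K)

lemma kd_apply (f : Chain K n) (T : Finset (Fin n)) :
    kd f T = ∑ l ∈ Tᶜ, koszulSign T l • (X l * f (insert l T)) := rfl

lemma kd_mul (p : MvPolynomial (Fin n) K) (f : Chain K n) : kd (p • f) = p • kd f := by
  funext T
  simp only [kd_apply, Pi.smul_apply, smul_eq_mul, Finset.mul_sum]
  refine Finset.sum_congr rfl fun l _ => ?_
  rw [mul_smul_comm]
  congr 1
  ring

lemma kd_kd (f : Chain K n) : kd (kd f) = 0 := by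
  funext T
  have key : kd (kd f) T = ∑ q : Fin n × Fin n,
      if q.1 ∉ T ∧ q.2 ∉ T ∧ q.1 ≠ q.2 then
        (koszulSign (insert q.1 T) q.2 * koszulSign T q.1) •
          (X q.1 * (X q.2 * f (insert q.2 (insert q.1 T)))) else 0 := by
    rw [Fintype.sum_prod_type, kd_apply, ← Finset.sum_subset (Finset.subset_univ Tᶜ)]
    · refine Finset.sum_congr rfl fun l hl => ?_
      rw [kd_apply, ← Finset.sum_subset (Finset.subset_univ (insert l T)ᶜ),
        Finset.mul_sum, Finset.smul_sum]
      · refine Finset.sum_congr rfl fun l' hl' => ?_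
        have h1 : l ∉ T := by simpa using hl
        have h2 : ¬ (l' = l) ∧ l' ∉ T := by simpa using hl'
        rw [if_pos ⟨h1, h2.2, fun h => h2.1 h.symm⟩, mul_smul_comm, smul_smul, mul_comm]
      · intro x _ hx
        rw [if_neg]
        rintro ⟨_, h2, h3⟩
        apply hx
        simp [h2, Ne.symm h3]
    · intro x _ hx
      refine Finset.sum_eq_zero fun y _ => ?_
      rw [if_neg]
      rintro ⟨h1, _, _⟩
      exact hx (by simpa using h1)
  rw [key]
  refine Finset.sum_involution (fun q _ => q.swap) ?_ ?_ (fun _ _ => Finset.mem_univ _)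
    (fun q _ => q.swap_swap)
  · rintro ⟨a, b⟩ _
    simp only [Prod.fst_swap, Prod.snd_swap]
    by_cases h : a ∉ T ∧ b ∉ T ∧ a ≠ b
    · rw [if_pos h, if_pos ⟨h.2.1, h.1, h.2.2.symm⟩, koszulSign_swap h.1 h.2.1 h.2.2,
        Finset.insert_comm a b T, mul_left_comm (X b)]
      simp
    · rw [if_neg h, if_neg (fun h' => h ⟨h'.2.1, h'.1, h'.2.2.symm⟩), add_zero]
  · rintro ⟨a, b⟩ _ hne heq
    have hab : a = b := by simpa using (congrArg Prod.snd heq)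
    simp [hab] at hne

/-- Left multiplication by the exterior generator `e_v`. -/
noncomputable def wedge (v : Fin n) (f : Chain K n) : Chain K n := fun S =>
  if v ∈ S then koszulSign (S.erase v) v • f (S.erase v) else 0

/-- Multiplication by a variable is null-homotopic on the Koszul complex. -/
lemma kd_wedge (v : Fin n) (f : Chain K n) :
    kd (wedge v f) + wedge v (kd f) = (X v : MvPolynomial (Fin n) K) • f := by
  funext T
  simp only [Pi.add_apply, Pi.smul_apply, smul_eq_mul]
  by_cases hv : v ∈ T
  · obtain ⟨C, hC, rfl⟩ : ∃ C, v ∉ C ∧ insert v C = T :=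
      ⟨T.erase v, Finset.notMem_erase v T, Finset.insert_erase hv⟩
    have e1 : wedge v (kd f) (insert v C) = koszulSign C v • kd f C := by
      simp [wedge, Finset.erase_insert hC]
    have e2 : (Cᶜ : Finset (Fin n)) = insert v (insert v C)ᶜ := by
      ext x
      by_cases hx : x = v <;> simp [hx, hC]
    rw [e1, kd_apply, kd_apply, e2, Finset.sum_insert (by simp), smul_add, smul_smul,
      koszulSign_sq, one_smul, add_comm (X v * _), ← add_assoc, Finset.smul_sum,
      ← Finset.sum_add_distrib, Finset.sum_eq_zero, zero_add]
    intro l hl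
    have h2 : l ≠ v ∧ l ∉ C := by simpa using hl
    have e3 : (insert l (insert v C)).erase v = insert l C := by
      rw [Finset.insert_comm, Finset.erase_insert (by simp [hC, h2.1.symm])]
    simp only [wedge, Finset.mem_insert, true_or, or_true, if_true, e3]
    rw [mul_smul_comm, smul_smul, smul_smul, ← add_smul,
      koszulSign_insert hC, koszulSign_insert h2.2]
    rcases lt_or_gt_of_ne h2.1 with h | h
    · rw [if_neg h.not_gt, if_pos h]
      simp [mul_comm]
    · rw [if_pos h, if_neg h.not_gt]
      simp [mul_comm]
  · have e1 : wedge v (kd f) T = 0 := by simp [wedge, hv]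
    rw [e1, add_zero, kd_apply, Finset.sum_eq_single v]
    · simp only [wedge, Finset.mem_insert_self, if_true, Finset.erase_insert hv]
      rw [mul_smul_comm, smul_smul, koszulSign_sq, one_smul]
    · intro l _ hl
      simp [wedge, hv, hl.symm]
    · intro h
      exact absurd (by simpa using hv) h

end Chains
/-! ### Monomial subcomplexes and degrees -/

section Support

variable {K : Type*} [Field K] {n : ℕ}

/-- `Supp F f`: every monomial `x^m e_S` occurring in the chain `f` satisfies `F S (supp m)`.
When `F S T` does not depend on `S` and is upward closed in `T`, this says that `f` has
coefficients in the squarefree monomial ideal `{p | all monomials of p have support in F}`. -/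
def Supp (F : Finset (Fin n) → Finset (Fin n) → Prop) (f : Chain K n) : Prop :=
  ∀ S m, coeff m (f S) ≠ 0 → F S m.support

variable {F F' : Finset (Fin n) → Finset (Fin n) → Prop} {f g : Chain K n}

lemma Supp.mono (h : ∀ S T, F S T → F' S T) (hf : Supp F f) : Supp F' f :=
  fun S m hm => h _ _ (hf S m hm)

lemma Supp.zero : Supp F (0 : Chain K n) := fun S m hm => by simp at hm

lemma Supp.add (hf : Supp F f) (hg : Supp F g) : Supp F (f + g) := by
  intro S m hm
  by_contra hF
  have h1 : coeff m (f S) = 0 := by_contra fun h => hF (hf S m h)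
  have h2 : coeff m (g S) = 0 := by_contra fun h => hF (hg S m h)
  simp [h1, h2] at hm

lemma Supp.neg (hf : Supp F f) : Supp F (-f) := fun S m hm => hf S m (by simpa using hm)

lemma Supp.sub (hf : Supp F f) (hg : Supp F g) : Supp F (f - g) := by
  rw [sub_eq_add_neg]
  exact hf.add hg.neg

lemma support_add_single (m : Fin n →₀ ℕ) (v : Fin n) :
    (Finsupp.single v 1 + m).support = insert v m.support := by
  ext x
  by_cases hx : x = v
  · subst hx
    simp
  · simp [hx]

lemma exists_of_coeff_X_mul {m : Fin n →₀ ℕ} {v : Fin n} {p : MvPolynomial (Fin n) K}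
    (h : coeff m (X v * p) ≠ 0) : ∃ m', coeff m' p ≠ 0 ∧ m.support = insert v m'.support := by
  rw [coeff_X_mul'] at h
  split_ifs at h with hv
  · refine ⟨_, h, ?_⟩
    rw [← support_add_single, add_tsub_cancel_of_le]
    simpa [Nat.one_le_iff_ne_zero] using hv
  · exact absurd rfl h

lemma Supp.X_smul (v : Fin n) (h : ∀ S T, F S T → F' S (insert v T)) (hf : Supp F f) :
    Supp F' ((X v : MvPolynomial (Fin n) K) • f) := by
  intro S m hm
  obtain ⟨m', h1, h2⟩ := exists_of_coeff_X_mul hm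
  rw [h2]
  exact h _ _ (hf S m' h1)

/-- Membership in the colon by a variable. -/
lemma Supp.of_X_smul (v : Fin n) (h : ∀ S T, F' S (insert v T) → F S T)
    (hf : Supp F' ((X v : MvPolynomial (Fin n) K) • f)) : Supp F f := by
  intro S m hm
  apply h
  rw [← support_add_single]
  apply hf
  simpa [coeff_X_mul] using hm

lemma exists_of_coeff_sum {ι : Type*} {s : Finset ι} {m : Fin n →₀ ℕ}
    {p : ι → MvPolynomial (Fin n) K} (h : coeff m (∑ i ∈ s, p i) ≠ 0) :
    ∃ i ∈ s, coeff m (p i) ≠ 0 := by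
  rw [coeff_sum] at h
  exact Finset.exists_ne_zero_of_sum_ne_zero h

lemma Supp.kd (h : ∀ S T l, l ∉ S → F (insert l S) T → F S (insert l T)) (hf : Supp F f) :
    Supp F (kd f) := by
  intro S m hm
  rw [kd_apply] at hm
  obtain ⟨l, hl, hm⟩ := exists_of_coeff_sum hm
  have hm' : coeff m (X l * f (insert l S)) ≠ 0 := by
    intro h0
    rw [coeff_smul, h0, smul_zero] at hm
    exact hm rfl
  obtain ⟨m', h1, h2⟩ := exists_of_coeff_X_mul hm'
  rw [h2]
  exact h _ _ _ (by simpa using hl) (hf _ _ h1)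

lemma Supp.wedge (v : Fin n) (h : ∀ S T, F (S.erase v) T → F' S T) (hf : Supp F f) :
    Supp F' (wedge v f) := by
  intro S m hm
  unfold _root_.wedge at hm
  split_ifs at hm with hv
  · refine h _ _ (hf _ m ?_)
    intro h0
    rw [coeff_smul, h0, smul_zero] at hm
    exact hm rfl
  · simp at hm

/-- Splitting off the multiples of a monomial `x^s`. -/
lemma Supp.split (s : Fin n →₀ ℕ) (h : ∀ S m, F' S m.support → F S m.support ∨ s ≤ m)
    (hf : Supp F' f) :
    ∃ a b : Chain K n, Supp F a ∧ f = a + (monomial s 1 : MvPolynomial (Fin n) K) • b := by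
  refine ⟨fun S => MvPolynomial.modMonomial (f S) s, fun S => MvPolynomial.divMonomial (f S) s, ?_, ?_⟩
  · intro S m hm
    by_cases hs : s ≤ m
    · rw [coeff_modMonomial_of_le _ hs] at hm
      exact absurd rfl hm
    · rw [coeff_modMonomial_of_not_le _ hs] at hm
      exact (h S m (hf S m hm)).resolve_right hs
  · funext S
    exact (modMonomial_add_divMonomial (f S) s).symm

/-- Chains concentrated in homological degree `i` with coefficients homogeneous of degree `e`. -/
def IsPart (i e : ℕ) (f : Chain K n) : Prop :=
  ∀ S, if S.card = i then (f S).IsHomogeneous e else f S = 0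

/-- The projection onto homological degree `i` and coefficient degree `e`. -/
noncomputable def proj (i e : ℕ) (f : Chain K n) : Chain K n :=
  fun S => if S.card = i then homogeneousComponent e (f S) else 0

lemma part_proj (i e : ℕ) (f : Chain K n) : IsPart i e (proj i e f) := by
  intro S
  unfold proj
  split_ifs
  · exact homogeneousComponent_isHomogeneous _ _
  · rfl

lemma proj_eq_self {i e : ℕ} (hf : IsPart i e f) : proj i e f = f := by
  funext S
  have h := hf S
  unfold proj
  split_ifs at h ⊢ with hS
  · exact homogeneousComponent_eq_self h
  · exact h.symm

lemma proj_add (i e : ℕ) (f g : Chain K n) : proj i e (f + g) = proj i e f + proj i e g := by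
  funext S
  simp only [proj, Pi.add_apply]
  split_ifs <;> simp

lemma Supp.proj (i e : ℕ) (hf : Supp F f) : Supp F (proj i e f) := by
  intro S m hm
  unfold _root_.proj at hm
  split_ifs at hm
  · rw [coeff_homogeneousComponent] at hm
    split_ifs at hm
    · exact hf S m hm
    · exact absurd rfl hm
  · simp at hm

lemma homogeneousComponent_X_mul (v : Fin n) (e : ℕ) (p : MvPolynomial (Fin n) K) :
    homogeneousComponent (e + 1) (X v * p) = X v * homogeneousComponent e p := by
  ext m
  rw [coeff_homogeneousComponent, coeff_X_mul', coeff_X_mul', coeff_homogeneousComponent]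
  by_cases hv : v ∈ m.support
  · have hm : m.degree = (m - Finsupp.single v 1).degree + 1 := by
      conv_lhs => rw [← tsub_add_cancel_of_le (show Finsupp.single v 1 ≤ m by
        simpa [Nat.one_le_iff_ne_zero] using hv)]
      simp
    simp only [hv, if_true, hm, add_left_inj]
  · simp [hv]

lemma proj_X_smul (i e : ℕ) (v : Fin n) (f : Chain K n) :
    proj i (e + 1) ((X v : MvPolynomial (Fin n) K) • f) =
      (X v : MvPolynomial (Fin n) K) • proj i e f := by
  funext S
  simp only [proj, Pi.smul_apply, smul_eq_mul]
  split_ifs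
  · exact homogeneousComponent_X_mul v e _
  · simp

lemma proj_kd (i e : ℕ) (f : Chain K n) : proj i (e + 1) (kd f) = kd (proj (i + 1) e f) := by
  funext S
  simp only [proj, kd_apply]
  split_ifs with hS
  · rw [map_sum]
    refine Finset.sum_congr rfl fun l hl => ?_
    rw [if_pos (by rw [Finset.card_insert_of_notMem (by simpa using hl), hS]), map_zsmul,
      homogeneousComponent_X_mul]
  · refine (Finset.sum_eq_zero fun l hl => ?_).symm
    rw [if_neg (by rw [Finset.card_insert_of_notMem (by simpa using hl)]; omega)]
    simp

lemma IsPart.kd {i e : ℕ} (hf : IsPart (i + 1) e f) : IsPart i (e + 1) (kd f) := by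
  rw [← proj_eq_self hf, ← proj_kd]
  exact part_proj _ _ _

end Support

/-! ### Vanishing of Koszul homology of quotients -/

section Vanishing

variable {K : Type*} [Field K] {n : ℕ}

/-- `Vanish K F r`: the Koszul homology of `R/I_F` vanishes in homological degree `i` and internal
degree `j` whenever `j - i > r`, that is, `reg (R/I_F) ≤ r`. Here `I_F` is the ideal spanned by
the monomials with support in `F`, and homology is taken via chains over `R`. -/
def Vanish (K : Type*) [Field K] {n : ℕ} (F : Finset (Fin n) → Prop) (r : ℕ) : Prop :=
  ∀ (i e : ℕ) (f : Chain K n), r < e → IsPart i e f → Supp (fun _ => F) (kd f) →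
    ∃ a c : Chain K n, Supp (fun _ => F) a ∧ f = a + kd c

variable {F F₁ F₂ : Finset (Fin n) → Prop} {r : ℕ}

lemma Vanish.mono {r' : ℕ} (h : r ≤ r') (hF : Vanish K F r) : Vanish K F r' :=
  fun i e f he => hF i e f (lt_of_le_of_lt h he)

/-- The first half of the diagram chase in
`0 → R/(I : x_v)(-1) → R/I → R/(I + x_v) → 0`: a cycle of `R/I` that bounds modulo `I + (x_v)`
comes from a cycle of `R/(I : x_v)`. -/
lemma exists_lift_colon (hup : ∀ S l, F S → F (insert l S)) (v : Fin n)
    (h1 : ∀ T, F (insert v T) → F₁ T) (h2 : ∀ T, F₂ T → F T ∨ v ∈ T) (hv : Vanish K F₂ r)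
    (h2' : ∀ T, F T → F₂ T)
    {i e : ℕ} {f : Chain K n} (he : r < e) (hf : IsPart i e f) (hd : Supp (fun _ => F) (kd f)) :
    ∃ a b c : Chain K n, Supp (fun _ => F) a ∧
      f = a + (X v : MvPolynomial (Fin n) K) • b + kd c ∧ Supp (fun _ => F₁) (kd b) := by
  obtain ⟨a₀, c, ha₀, hfc⟩ := hv i e f he hf (hd.mono fun _ => h2')
  obtain ⟨a, b, ha, hab⟩ := ha₀.split (F := fun _ => F) (Finsupp.single v 1) (by
    intro S m hm
    refine (h2 _ hm).imp_right fun h => ?_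
    simpa [Nat.one_le_iff_ne_zero] using h)
  refine ⟨a, b, c, ha, by rw [hfc, hab]; rfl, ?_⟩
  refine Supp.of_X_smul (F' := fun _ => F) v (fun _ => h1) ?_
  have : (X v : MvPolynomial (Fin n) K) • kd b = kd f - kd a := by
    rw [hfc, hab, map_add, map_add, kd_kd]
    change _ = kd a + kd ((X v : MvPolynomial (Fin n) K) • b) + 0 - kd a
    rw [kd_mul]
    abel
  rw [this]
  exact hd.sub (ha.kd fun _ _ _ _ => hup _ _)

/-- `reg (R/I) ≤ max (reg (R/(I : x_v)) + 1, reg (R/(I + x_v)))`. -/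
lemma Vanish.of_colon (hup : ∀ S l, F S → F (insert l S)) (v : Fin n)
    (h1 : ∀ T, F (insert v T) ↔ F₁ T) (h2 : ∀ T, F₂ T ↔ F T ∨ v ∈ T)
    (hv1 : Vanish K F₁ r) (hv2 : Vanish K F₂ (r + 1)) : Vanish K F (r + 1) := by
  intro i e f he hf hd
  obtain ⟨a, b, c, ha, hfc, hb⟩ := exists_lift_colon hup v (fun T => (h1 T).1)
    (fun T => (h2 T).1) hv2 (fun T hT => (h2 T).2 (Or.inl hT)) he hf hd
  obtain ⟨e, rfl⟩ : ∃ e', e = e' + 1 := ⟨e - 1, by omega⟩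
  have hb' : Supp (fun _ => F₁) (kd (proj i e b)) := by
    cases i with
    | zero =>
      convert Supp.zero (K := K) using 1
      funext T
      rw [kd_apply]
      refine Finset.sum_eq_zero fun l _ => ?_
      simp [proj]
    | succ i =>
      rw [← proj_kd]
      exact hb.proj _ _
  obtain ⟨a', c', ha', hbc⟩ := hv1 i e _ (by omega) (part_proj i e b) hb'
  refine ⟨proj i (e + 1) a + (X v : MvPolynomial (Fin n) K) • a',
    (X v : MvPolynomial (Fin n) K) • c' + proj (i + 1) e c, (ha.proj _ _).add
      (ha'.X_smul v fun _ T => (h1 T).2), ?_⟩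
  conv_lhs => rw [← proj_eq_self hf, hfc, proj_add, proj_add, proj_X_smul, hbc, proj_kd]
  rw [map_add, kd_mul, smul_add]
  abel

/-- When `x_v` is a nonzerodivisor on `R/I`, passing to `I + (x_v)` does not lower the regularity
bound, since `x_v` acts as zero on Koszul homology. -/
lemma Vanish.of_nonzerodivisor (hup : ∀ S l, F S → F (insert l S)) (v : Fin n)
    (h1 : ∀ T, F (insert v T) → F T) (h2 : ∀ T, F₂ T ↔ F T ∨ v ∈ T)
    (hv2 : Vanish K F₂ r) : Vanish K F r := by
  intro i e f he hf hd
  obtain ⟨a, b, c, ha, hfc, hb⟩ := exists_lift_colon hup v h1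
    (fun T => (h2 T).1) hv2 (fun T hT => (h2 T).2 (Or.inl hT)) he hf hd
  refine ⟨a + wedge v (kd b), wedge v b + c, ha.add (hb.wedge v fun _ _ h => h), ?_⟩
  rw [hfc, ← kd_wedge, map_add]
  abel

/-- The quotient by all variables. -/
lemma vanish_maximal (h : ∀ T : Finset (Fin n), T.Nonempty → F T) : Vanish K F r := by
  intro i e f he hf _
  refine ⟨f, 0, ?_, by simp⟩
  intro S m hm
  apply h
  have := hf S
  split_ifs at this
  · rw [Finsupp.support_nonempty_iff]
    rintro rfl
    have := this hm
    simp at this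
    omega
  · simp [this] at hm

end Vanishing
/-! ### The upper bound: induced subgraphs of a forest -/

section Forest

variable {K : Type*} [Field K] {n : ℕ}

/-- The supports of monomials in `I(G) + (x_a : a ∈ A)`. Modulo the variables in `A`, this ideal
is the edge ideal of the induced subgraph `G \ A`. -/
def EdgeFam {n : ℕ} (G : SimpleGraph (Fin n)) (A T : Finset (Fin n)) : Prop :=
  (∃ a ∈ T, a ∈ A) ∨ ∃ u v, G.Adj u v ∧ u ∈ T ∧ v ∈ T

/-- If the part of a forest outside `A` has an edge, then it has a leaf: take an endpoint of a
longest path. -/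
lemma exists_leaf {G : SimpleGraph (Fin n)} (hG : G.IsAcyclic) {A : Finset (Fin n)}
    {x y : Fin n} (hxy : G.Adj x y) (hx : x ∉ A) (hy : y ∉ A) :
    ∃ u v, G.Adj u v ∧ u ∉ A ∧ v ∉ A ∧ ∀ w, w ∉ A → G.Adj u w → w = v := by
  let H : SimpleGraph (Fin n) :=
    { Adj := fun a b => G.Adj a b ∧ a ∉ A ∧ b ∉ A
      symm := ⟨fun a b h => ⟨h.1.symm, h.2.2, h.2.1⟩⟩
      loopless := ⟨fun a h => G.loopless.irrefl a h.1⟩ }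
  have hH : H.IsAcyclic := hG.anti fun a b h => h.1
  have : Nonempty (Fin n) := ⟨x⟩
  obtain ⟨u, t, p, hp, hmax⟩ := SimpleGraph.Walk.exists_isPath_forall_isPath_length_le_length H
  have hHxy : H.Adj x y := ⟨hxy, hx, hy⟩
  have hlen := hmax _ _ _ (SimpleGraph.Walk.IsPath.of_adj hHxy)
  have hnil : ¬p.Nil := by
    intro h
    rw [← SimpleGraph.Walk.length_eq_zero_iff] at h
    simp [h] at hlen
  have hs := p.adj_snd hnil
  refine ⟨u, p.snd, hs.1, hs.2.1, hs.2.2, fun w hw huw => ?_⟩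
  have hadj : H.Adj u w := ⟨huw, hs.2.1, hw⟩
  apply hH.eq_snd_of_adj_start hp hadj
  by_contra hsupp
  have := hmax _ _ _ (hp.cons (h := hadj.symm) hsupp)
  simp at this

/-- An edge at a leaf `u` with neighbour `v` extends every induced matching of `G` that avoids `A`
and all neighbours of `v`. -/
lemma isInducedMatching_insert {G : SimpleGraph (Fin n)} {A : Finset (Fin n)} {u v : Fin n}
    (huv : G.Adj u v) (hleaf : ∀ w, w ∉ A → G.Adj u w → w = v)
    {M : Finset (Sym2 (Fin n))} (hM : IsInducedMatching G M)
    (hA : ∀ e ∈ M, ∀ x ∈ e, x ∉ A ∧ ¬ G.Adj v x) :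
    IsInducedMatching G (insert s(u, v) M) ∧ s(u, v) ∉ M := by
  -- `v` is not covered by `M`: its partner would be a neighbour of `v`.
  have hv : ∀ e ∈ M, v ∉ e := by
    intro e he hve
    obtain ⟨w, rfl⟩ := Sym2.mem_iff_exists.1 hve
    exact (hA _ he w (Sym2.mem_mk_right v w)).2 (hM.1 he)
  have hu : ∀ e ∈ M, u ∉ e := fun e he hue => (hA e he u hue).2 huv.symm
  refine ⟨⟨?_, ?_, ?_⟩, fun h => hv _ h (Sym2.mem_mk_right u v)⟩
  · intro e he
    rcases Finset.mem_insert.1 (Finset.mem_coe.1 he) with rfl | he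
    · exact huv
    · exact hM.1 he
  · intro e he f hf hef x hxe hxf
    rcases Finset.mem_insert.1 he with rfl | he' <;>
      rcases Finset.mem_insert.1 hf with rfl | hf'
    · exact hef rfl
    · rcases Sym2.mem_iff.1 hxe with rfl | rfl
      · exact hu _ hf' hxf
      · exact hv _ hf' hxf
    · rcases Sym2.mem_iff.1 hxf with rfl | rfl
      · exact hu _ he' hxe
      · exact hv _ he' hxe
    · exact hM.2.1 e he' f hf' hef x hxe hxf
  · have cov : ∀ x, (∃ f ∈ insert s(u, v) M, x ∈ f) → x = u ∨ x = v ∨ ∃ f ∈ M, x ∈ f := by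
      rintro x ⟨f, hf, hxf⟩
      rcases Finset.mem_insert.1 hf with rfl | hf
      · rcases Sym2.mem_iff.1 hxf with h | h
        · exact Or.inl h
        · exact Or.inr (Or.inl h)
      · exact Or.inr (Or.inr ⟨f, hf, hxf⟩)
    -- an edge between `{u, v}` and a vertex covered by `M` is impossible
    have noU : ∀ x, (∃ f ∈ M, x ∈ f) → ¬ G.Adj u x := by
      rintro x ⟨f, hf, hxf⟩ hux
      have := hleaf x (hA f hf x hxf).1 hux
      subst this
      exact hv f hf hxf
    have noV : ∀ x, (∃ f ∈ M, x ∈ f) → ¬ G.Adj v x := by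
      rintro x ⟨f, hf, hxf⟩
      exact (hA f hf x hxf).2
    intro e he hcov
    induction e using Sym2.ind with
    | _ x y =>
      have hxy : G.Adj x y := he
      have hx := cov x (hcov x (Sym2.mem_mk_left x y))
      have hy := cov y (hcov y (Sym2.mem_mk_right x y))
      rw [Finset.mem_insert]
      rcases hx with rfl | rfl | hx <;> rcases hy with rfl | rfl | hy
      · exact absurd hxy (G.irrefl)
      · exact Or.inl rfl
      · exact absurd hxy (noU _ hy)
      · exact Or.inl Sym2.eq_swap
      · exact absurd hxy (G.irrefl)
      · exact absurd hxy (noV _ hy)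
      · exact absurd hxy.symm (noU _ hx)
      · exact absurd hxy.symm (noV _ hx)
      · refine Or.inr (hM.2.2 _ he fun z hz => ?_)
        rcases Sym2.mem_iff.1 hz with rfl | rfl
        · exact hx
        · exact hy

/-- `reg (R/I(G \ A)) ≤ ν'(G \ A)` for a forest `G`, by induction on the complement of `A`: colon
and sum with a variable `x_v` replace `A` by `A ∪ N(v)` and `A ∪ {v}`. -/
theorem vanish_forest {G : SimpleGraph (Fin n)} (hG : G.IsAcyclic) (A : Finset (Fin n)) (r : ℕ)
    (hr : ∀ M : Finset (Sym2 (Fin n)), IsInducedMatching G M → (∀ e ∈ M, ∀ x ∈ e, x ∉ A) →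
      M.card ≤ r) : Vanish K (EdgeFam G A) r := by
  classical
  induction hk : Aᶜ.card using Nat.strong_induction_on generalizing A r with
  | _ k ih =>
  subst hk
  have lt : ∀ {B : Finset (Fin n)}, A ⊆ B → ∀ x ∈ B, x ∉ A → Bᶜ.card < Aᶜ.card := by
    intro B hAB x hxB hxA
    apply Finset.card_lt_card
    rw [Finset.compl_ssubset_compl]
    exact ⟨hAB, fun h => hxA (h hxB)⟩
  have hup : ∀ S l, EdgeFam G A S → EdgeFam G A (insert l S) := by
    rintro S l (⟨a, ha, haA⟩ | ⟨u, v, huv, hu, hv⟩)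
    · exact Or.inl ⟨a, Finset.mem_insert_of_mem ha, haA⟩
    · exact Or.inr ⟨u, v, huv, Finset.mem_insert_of_mem hu, Finset.mem_insert_of_mem hv⟩
  have hplus : ∀ v T, EdgeFam G (insert v A) T ↔ EdgeFam G A T ∨ v ∈ T := by
    intro v T
    constructor
    · rintro (⟨a, ha, haA⟩ | h)
      · rcases Finset.mem_insert.1 haA with rfl | haA
        · exact Or.inr ha
        · exact Or.inl (Or.inl ⟨a, ha, haA⟩)
      · exact Or.inl (Or.inr h)
    · rintro ((⟨a, ha, haA⟩ | h) | h)
      · exact Or.inl ⟨a, ha, Finset.mem_insert_of_mem haA⟩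
      · exact Or.inr h
      · exact Or.inl ⟨v, h, Finset.mem_insert_self v A⟩
  have hcolon : ∀ v, v ∉ A → ∀ T, EdgeFam G A (insert v T) ↔
      EdgeFam G (A ∪ Finset.univ.filter (G.Adj v)) T := by
    intro v hv T
    constructor
    · rintro (⟨a, ha, haA⟩ | ⟨x, y, hxy, hx, hy⟩)
      · rcases Finset.mem_insert.1 ha with rfl | ha
        · exact absurd haA hv
        · exact Or.inl ⟨a, ha, Finset.mem_union_left _ haA⟩
      · rcases Finset.mem_insert.1 hx with rfl | hx' <;>
          rcases Finset.mem_insert.1 hy with rfl | hy'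
        · exact absurd hxy (G.irrefl)
        · exact Or.inl ⟨y, hy', Finset.mem_union_right _ (by simpa using hxy)⟩
        · exact Or.inl ⟨x, hx', Finset.mem_union_right _ (by simpa using hxy.symm)⟩
        · exact Or.inr ⟨x, y, hxy, hx', hy'⟩
    · rintro (⟨a, ha, haA⟩ | ⟨x, y, hxy, hx, hy⟩)
      · rcases Finset.mem_union.1 haA with haA | haA
        · exact Or.inl ⟨a, Finset.mem_insert_of_mem ha, haA⟩
        · exact Or.inr ⟨v, a, by simpa using haA, Finset.mem_insert_self v T,
            Finset.mem_insert_of_mem ha⟩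
      · exact Or.inr ⟨x, y, hxy, Finset.mem_insert_of_mem hx, Finset.mem_insert_of_mem hy⟩
  have hplus_ih : ∀ v, v ∉ A → Vanish K (EdgeFam G (insert v A)) r := by
    intro v hv
    refine ih _ (lt (Finset.subset_insert v A) v (Finset.mem_insert_self v A) hv) _ _ ?_ rfl
    intro M hM hMA
    exact hr M hM fun e he x hx h => hMA e he x hx (Finset.mem_insert_of_mem h)
  by_cases hedge : ∃ x y, G.Adj x y ∧ x ∉ A ∧ y ∉ A
  · obtain ⟨x, y, hxy, hx, hy⟩ := hedge
    obtain ⟨u, v, huv, hu, hv, hleaf⟩ := exists_leaf hG hxy hx hy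
    have ext : ∀ M : Finset (Sym2 (Fin n)), IsInducedMatching G M →
        (∀ e ∈ M, ∀ x ∈ e, x ∉ A ∪ Finset.univ.filter (G.Adj v)) → M.card + 1 ≤ r := by
      intro M hM hMA
      have hMA' : ∀ e ∈ M, ∀ x ∈ e, x ∉ A ∧ ¬ G.Adj v x := by
        intro e he x hx
        simpa using hMA e he x hx
      obtain ⟨h1, h2⟩ := isInducedMatching_insert huv hleaf hM hMA'
      rw [← Finset.card_insert_of_notMem h2]
      refine hr _ h1 fun e he x hx => ?_
      rcases Finset.mem_insert.1 he with rfl | he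
      · rcases Sym2.mem_iff.1 hx with rfl | rfl
        · exact hu
        · exact hv
      · exact (hMA' e he x hx).1
    obtain ⟨r, rfl⟩ : ∃ r', r = r' + 1 := by
      have := ext ∅ ⟨by simp, by simp, fun e he h => by
        induction e using Sym2.ind with
        | _ x y => simpa using h x (Sym2.mem_mk_left x y)⟩ (by simp)
      exact ⟨r - 1, by simp at this; omega⟩
    refine Vanish.of_colon hup v (hcolon v hv) (hplus v) ?_ (hplus_ih v hv)
    refine ih _ (lt Finset.subset_union_left u (by simp [huv.symm]) hu) _ _ ?_ rfl
    intro M hM hMA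
    exact Nat.le_of_succ_le_succ (ext M hM hMA)
  · by_cases hA : ∃ v, v ∉ A
    · obtain ⟨v, hv⟩ := hA
      refine Vanish.of_nonzerodivisor hup v (fun T hT => ?_) (hplus v) (hplus_ih v hv)
      rw [hcolon v hv] at hT
      rcases hT with ⟨a, ha, haA⟩ | h
      · rcases Finset.mem_union.1 haA with haA | haA
        · exact Or.inl ⟨a, ha, haA⟩
        · refine Or.inl ⟨a, ha, ?_⟩
          by_contra haA'
          exact hedge ⟨v, a, by simpa using haA, hv, haA'⟩
      · exact Or.inr h
    · push Not at hA
      exact vanish_maximal fun T hT => Or.inl ⟨hT.choose, hT.choose_spec, hA _⟩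

/-- Exactness of `K(x_1,…,x_n; R)` in the range of coefficient degree at least one. -/
lemma exists_eq_kd {i e : ℕ} {f : Chain K n} (he : 0 < e) (hf : IsPart i e f) (hd : kd f = 0) :
    ∃ c : Chain K n, f = kd c := by
  -- the edgeless graph has `I(G) = 0` and only the empty induced matching
  have hV : Vanish K (EdgeFam (⊥ : SimpleGraph (Fin n)) ∅) 0 := by
    refine vanish_forest SimpleGraph.isAcyclic_bot ∅ 0 fun M hM _ => ?_
    have : (M : Set (Sym2 (Fin n))) ⊆ ∅ := by simpa using hM.1
    simp_all
  obtain ⟨a, c, ha, hac⟩ := hV i e f he hf (by rw [hd]; exact Supp.zero)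
  refine ⟨c, ?_⟩
  have : a = 0 := by
    funext S
    ext m
    by_contra h
    simpa [EdgeFam] using ha S m h
  rw [hac, this, zero_add]

end Forest
/-! ### The lower bound: the cycle of an induced matching -/

section Matching

variable {K : Type*} [Field K] {n : ℕ}

/-- The supports of monomials in the ideal generated by the edges in `M`. -/
def MatchFam {n : ℕ} (M : Finset (Sym2 (Fin n))) (T : Finset (Fin n)) : Prop :=
  ∃ e ∈ M, ∀ x ∈ e, x ∈ T

/-- The monomials `x^m e_S` (with `supp m = T`) that lie in `I_M K(x; R)` or whose multidegree is
not supported in `W`. Chains spanned by these form a subcomplex. -/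
def OutFam {n : ℕ} (W : Finset (Fin n)) (M : Finset (Sym2 (Fin n)))
    (S T : Finset (Fin n)) : Prop :=
  MatchFam M T ∨ ¬ (S ⊆ W ∧ T ⊆ W)

lemma MatchFam.insert {M : Finset (Sym2 (Fin n))} {T : Finset (Fin n)} (l : Fin n)
    (h : MatchFam M T) : MatchFam M (insert l T) := by
  obtain ⟨e, he, h⟩ := h
  exact ⟨e, he, fun x hx => Finset.mem_insert_of_mem (h x hx)⟩

lemma MatchFam.of_insert {M : Finset (Sym2 (Fin n))} {T : Finset (Fin n)} {l : Fin n}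
    (hl : ∀ e ∈ M, l ∉ e) (h : MatchFam M (Insert.insert l T)) : MatchFam M T := by
  obtain ⟨e, he, h⟩ := h
  refine ⟨e, he, fun x hx => ?_⟩
  rcases Finset.mem_insert.1 (h x hx) with rfl | h
  · exact absurd hx (hl e he)
  · exact h

lemma outFam_kd {W : Finset (Fin n)} {M : Finset (Sym2 (Fin n))} (S T : Finset (Fin n))
    (l : Fin n) (_ : l ∉ S) (h : OutFam W M (insert l S) T) : OutFam W M S (insert l T) := by
  refine h.imp (fun h => h.insert l) (fun h h' => h ?_)
  exact ⟨Finset.insert_subset (h'.2 (Finset.mem_insert_self l T)) h'.1,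
    (Finset.subset_insert l T).trans h'.2⟩

lemma IsPart.X_wedge {k : ℕ} (u v : Fin n) {y : Chain K n} (hy : IsPart k k y) :
    IsPart (k + 1) (k + 1) ((X u : MvPolynomial (Fin n) K) • wedge v y) := by
  intro S
  simp only [Pi.smul_apply, smul_eq_mul, wedge]
  by_cases hv : v ∈ S
  · have h := hy (S.erase v)
    have hc := Finset.card_erase_add_one hv
    rw [if_pos hv]
    by_cases hS : S.card = k + 1
    · rw [if_pos (by omega)] at h
      rw [if_pos hS, add_comm k 1]
      refine (isHomogeneous_X K u).mul ?_
      exact (homogeneousSubmodule (Fin n) K k).toAddSubgroup.zsmul_mem h _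
    · rw [if_neg (by omega)] at h
      rw [if_neg hS, h]
      simp
  · rw [if_neg hv, mul_zero]
    split_ifs
    · exact isHomogeneous_zero _ _ _
    · rfl

/-- For pairwise disjoint edges `M` inside `W`, there is a chain `y` of homological degree `|M|`
and internal degree `2|M|` which is a cycle modulo `I_M`, but not a boundary modulo chains outside
multidegrees supported in `W`. It is the product of the chains `x_u e_v` over the edges `uv`.
The last clause says that its image `dy` under the connecting map to the homology of `I_M` is
nonzero as well. -/
theorem exists_matching_chain (W : Finset (Fin n)) (M : Finset (Sym2 (Fin n)))
    (hdis : ∀ e ∈ M, ∀ f ∈ M, e ≠ f → ∀ v, v ∈ e → v ∉ f)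
    (hdiag : ∀ e ∈ M, ¬ e.IsDiag) (hW : ∀ e ∈ M, ∀ x ∈ e, x ∈ W) :
    ∃ y : Chain K n, IsPart M.card M.card y ∧ Supp (fun _ => MatchFam M) (kd y) ∧
      (∀ t c : Chain K n, Supp (OutFam W M) t → y ≠ t + kd c) ∧
      (M.Nonempty → ∀ t : Chain K n, Supp (OutFam W M) t → kd y ≠ kd t) := by
  induction M using Finset.induction_on with
  | empty =>
    refine ⟨fun S => if S = ∅ then 1 else 0, ?_, ?_, ?_, by simp⟩
    · intro S
      by_cases hS : S = ∅
      · simpa [hS] using isHomogeneous_one (Fin n) K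
      · simp [hS]
    · convert Supp.zero (K := K) using 1
      funext T
      rw [kd_apply]
      simp
    · intro t c ht h
      have h0 := congrArg (coeff 0) (congrFun h ∅)
      have ht0 : coeff 0 (t ∅) = 0 := by
        by_contra hne
        have := ht ∅ 0 hne
        simp [OutFam, MatchFam] at this
      have hc0 : coeff 0 (kd c ∅) = 0 := by
        rw [kd_apply, coeff_sum]
        refine Finset.sum_eq_zero fun l _ => ?_
        rw [coeff_smul, coeff_X_mul']
        simp
      rw [Pi.add_apply, coeff_add, ht0, hc0] at h0
      simp at h0
  | insert e M he ih =>
    obtain ⟨y, hy, hdy, hne, -⟩ := ih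
      (fun e he f hf => hdis e (Finset.mem_insert_of_mem he) f (Finset.mem_insert_of_mem hf))
      (fun e he => hdiag e (Finset.mem_insert_of_mem he))
      (fun e he => hW e (Finset.mem_insert_of_mem he))
    have heM : ∀ f ∈ M, ∀ x ∈ e, x ∉ f := fun f hf x hx =>
      hdis e (Finset.mem_insert_self e M) f (Finset.mem_insert_of_mem hf)
        (fun h => he (h ▸ hf)) x hx
    have heW := hW e (Finset.mem_insert_self e M)
    have hed := hdiag e (Finset.mem_insert_self e M)
    induction e using Sym2.ind with
    | _ u v =>
    have huv : u ≠ v := by simpa using hed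
    have huM : ∀ f ∈ M, u ∉ f := fun f hf => heM f hf u (Sym2.mem_mk_left u v)
    have hvM : ∀ f ∈ M, v ∉ f := fun f hf => heM f hf v (Sym2.mem_mk_right u v)
    have huW := heW u (Sym2.mem_mk_left u v)
    have hvW := heW v (Sym2.mem_mk_right u v)
    set z : Chain K n := (X u : MvPolynomial (Fin n) K) • wedge v y with hz
    have hdz : kd z = (X u : MvPolynomial (Fin n) K) • (X v : MvPolynomial (Fin n) K) • y -
        (X u : MvPolynomial (Fin n) K) • wedge v (kd y) := by
      rw [hz, kd_mul, ← smul_sub, ← kd_wedge v y, add_sub_cancel_right]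
    -- The connecting map of `0 → R/I_M(-2) → R/I_M → R/I_{M ∪ uv} → 0` sends `z` to `y`.
    have hnb : ∀ t : Chain K n, Supp (OutFam W (insert s(u, v) M)) t → kd z ≠ kd t := by
      intro t ht h
      obtain ⟨a, b, ha, hab⟩ := ht.split (F := OutFam W M)
        (Finsupp.single u 1 + Finsupp.single v 1) (by
          rintro S m (⟨f, hf, hfm⟩ | h)
          · rcases Finset.mem_insert.1 hf with rfl | hf
            · right
              have h1 := hfm u (Sym2.mem_mk_left u v)
              have h2 := hfm v (Sym2.mem_mk_right u v)
              intro x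
              simp only [Finsupp.mem_support_iff] at h1 h2
              simp only [Finsupp.add_apply, Finsupp.single_apply]
              split_ifs with h3 h4
              · exact absurd (h3.trans h4.symm) huv
              · subst h3; omega
              · subst x; omega
              · omega
            · exact Or.inl (Or.inl ⟨f, hf, hfm⟩)
          · exact Or.inl (Or.inr h))
      have hmon : (monomial (Finsupp.single u 1 + Finsupp.single v 1) 1 : MvPolynomial (Fin n) K) =
          X u * X v := by
        rw [X, X, monomial_mul, one_mul]
      have hxx : Supp (OutFam W M)
          ((X u : MvPolynomial (Fin n) K) • (X v : MvPolynomial (Fin n) K) • (y - kd b)) := by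
        have : (X u : MvPolynomial (Fin n) K) • (X v : MvPolynomial (Fin n) K) • (y - kd b) =
            (X u : MvPolynomial (Fin n) K) • wedge v (kd y) + kd a := by
          rw [hdz, hab, map_add, kd_mul, hmon, mul_smul] at h
          rw [smul_sub, smul_sub, sub_eq_iff_eq_add, add_assoc, ← h]
          abel
        rw [this]
        refine Supp.add ?_ (ha.kd outFam_kd)
        refine Supp.X_smul (F := fun _ => MatchFam M) u (fun S T h => Or.inl (h.insert u)) ?_
        exact hdy.wedge v fun _ _ h => h
      have hcancel : ∀ w, w ∈ W → (∀ f ∈ M, w ∉ f) → ∀ S T,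
          OutFam W M S (insert w T) → OutFam W M S T := by
        rintro w hw hwM S T (h | h)
        · exact Or.inl (h.of_insert hwM)
        · exact Or.inr fun h' => h ⟨h'.1, Finset.insert_subset hw h'.2⟩
      have hy' := (hxx.of_X_smul u (hcancel u huW huM)).of_X_smul v (hcancel v hvW hvM)
      exact hne _ b hy' (by abel)
    refine ⟨z, ?_, ?_, ?_, fun _ => hnb⟩
    · rw [Finset.card_insert_of_notMem he]
      exact hy.X_wedge u v
    · rw [hdz]
      refine Supp.sub ?_ ?_
      · intro S m hm
        obtain ⟨m₁, hm₁, h₁⟩ := exists_of_coeff_X_mul hm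
        obtain ⟨m₂, -, h₂⟩ := exists_of_coeff_X_mul hm₁
        refine ⟨s(u, v), Finset.mem_insert_self _ _, fun x hx => ?_⟩
        rw [h₁, h₂]
        rcases Sym2.mem_iff.1 hx with rfl | rfl <;> simp
      · refine Supp.X_smul (F := fun _ => MatchFam M) u (fun S T h => ?_)
          (hdy.wedge v fun _ _ h => h)
        obtain ⟨f, hf, h⟩ := h.insert u
        exact ⟨f, Finset.mem_insert_of_mem hf, h⟩
    · intro t c ht h
      refine hnb t ht ?_
      rw [h, map_add, kd_kd, add_zero]

end Matching
/-! ### Graded Betti numbers of the edge ideal -/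

section Betti

variable {K : Type*} [Field K] {n : ℕ}

lemma mem_edgeIdeal_iff (G : SimpleGraph (Fin n)) (p : MvPolynomial (Fin n) K) :
    p ∈ edgeIdeal K G ↔ ∀ m, coeff m p ≠ 0 → EdgeFam G ∅ m.support := by
  have hI : edgeIdeal K G = Ideal.span ((fun s => monomial s (1 : K)) ''
      {s | ∃ u v, G.Adj u v ∧ s = Finsupp.single u 1 + Finsupp.single v 1}) := by
    unfold edgeIdeal
    congr 1
    ext q
    constructor
    · rintro ⟨u, v, huv, rfl⟩
      exact ⟨_, ⟨u, v, huv, rfl⟩, by simp [X, monomial_mul]⟩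
    · rintro ⟨_, ⟨u, v, huv, rfl⟩, rfl⟩
      exact ⟨u, v, huv, by simp [X, monomial_mul]⟩
  rw [hI, mem_ideal_span_monomial_image]
  refine forall_congr' fun m => ?_
  rw [mem_support_iff]
  refine imp_congr_right fun _ => ?_
  constructor
  · rintro ⟨_, ⟨u, v, huv, rfl⟩, hle⟩
    refine Or.inr ⟨u, v, huv, ?_, ?_⟩
    · have := hle u
      simp only [Finsupp.add_apply, Finsupp.single_eq_same] at this
      rw [Finsupp.mem_support_iff]
      omega
    · have := hle v
      simp only [Finsupp.add_apply, Finsupp.single_eq_same] at this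
      rw [Finsupp.mem_support_iff]
      omega
  · rintro (⟨a, _, ha⟩ | ⟨u, v, huv, hu, hv⟩)
    · exact absurd ha (Finset.notMem_empty a)
    · refine ⟨_, ⟨u, v, huv, rfl⟩, fun x => ?_⟩
      have hne := huv.ne
      rw [Finsupp.mem_support_iff] at hu hv
      simp only [Finsupp.add_apply, Finsupp.single_apply]
      split_ifs with h1 h2
      · exact absurd (h1.trans h2.symm) hne
      · subst h1
        omega
      · rename_i h2
        subst h2
        omega
      · omega

lemma mem_koszulPart_iff (G : SimpleGraph (Fin n)) {i e : ℕ} {j : ℤ} (hj : j - i = e)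
    (f : Chain K n) :
    f ∈ koszulPart K n (MvPolynomial (Fin n) K) (idealGrading K n (edgeIdeal K G)) i j ↔
      IsPart i e f ∧ Supp (fun _ => EdgeFam G ∅) f := by
  have h1 : f ∈ koszulPart K n (MvPolynomial (Fin n) K) (idealGrading K n (edgeIdeal K G)) i j ↔
      ∀ S : Finset (Fin n), if S.card = i then
        f S ∈ idealGrading K n (edgeIdeal K G) (j - i) else f S = 0 := Iff.rfl
  have h2 : ∀ p, p ∈ idealGrading K n (edgeIdeal K G) (j - i) ↔
      p ∈ edgeIdeal K G ∧ p.IsHomogeneous e := by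
    intro p
    rw [hj]
    simp [idealGrading]
  rw [h1]
  constructor
  · intro h
    refine ⟨fun S => ?_, fun S m hm => ?_⟩
    · have := h S
      split_ifs at this ⊢ with hS
      · exact ((h2 _).1 this).2
      · exact this
    · have := h S
      split_ifs at this with hS
      · exact (mem_edgeIdeal_iff G _).1 ((h2 _).1 this).1 m hm
      · simp [this] at hm
  · rintro ⟨hp, hs⟩ S
    have := hp S
    split_ifs at this ⊢ with hS
    · exact (h2 _).2 ⟨(mem_edgeIdeal_iff G _).2 (hs S), this⟩
    · exact this

lemma bettiIdeal_eq_zero {G : SimpleGraph (Fin n)} {i : ℕ} {j : ℤ}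
    (h : ∀ f ∈ koszulPart K n (MvPolynomial (Fin n) K) (idealGrading K n (edgeIdeal K G)) i j,
      kd f = 0 → ∃ t ∈ koszulPart K n (MvPolynomial (Fin n) K)
        (idealGrading K n (edgeIdeal K G)) (i + 1) j, kd t = f) :
    bettiIdeal K n (edgeIdeal K G) i j = 0 := by
  unfold bettiIdeal gradedBetti
  have : ∀ (Z B : Submodule K (Chain K n)), Z ≤ B →
      Module.finrank K (Z ⧸ B.comap Z.subtype) = 0 := by
    intro Z B hZB
    have : Subsingleton (Z ⧸ B.comap Z.subtype) := by
      rw [Submodule.Quotient.subsingleton_iff, eq_top_iff]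
      exact fun x _ => hZB x.2
    exact Module.finrank_zero_of_subsingleton
  refine this _ _ ?_
  rintro f ⟨hf1, hf2⟩
  exact h f hf2 hf1

/-- A cycle that is not a boundary makes the Betti number nonzero; the finite dimension of the
graded pieces is needed because `Module.finrank` is zero in infinite dimension. -/
lemma bettiIdeal_ne_zero {G : SimpleGraph (Fin n)} {i e : ℕ} {j : ℤ} (hj : j - i = e)
    {f : Chain K n}
    (hf : f ∈ koszulPart K n (MvPolynomial (Fin n) K) (idealGrading K n (edgeIdeal K G)) i j)
    (hd : kd f = 0) (h : ∀ t ∈ koszulPart K n (MvPolynomial (Fin n) K)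
        (idealGrading K n (edgeIdeal K G)) (i + 1) j, kd t ≠ f) :
    bettiIdeal K n (edgeIdeal K G) i j ≠ 0 := by
  unfold bettiIdeal gradedBetti
  have key : ∀ (Z B : Submodule K (Chain K n)), f ∈ Z → f ∉ B →
      (∀ g ∈ Z, ∀ S, g S ∈ restrictTotalDegree (Fin n) K e) →
      Module.finrank K (Z ⧸ B.comap Z.subtype) ≠ 0 := by
    intro Z B hZ hB hfin
    let φ : Z →ₗ[K] (Finset (Fin n) → restrictTotalDegree (Fin n) K e) :=
      LinearMap.pi fun S => LinearMap.codRestrict _ ((LinearMap.proj S).comp Z.subtype)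
        fun g => hfin g.1 g.2 S
    have hφ : Function.Injective φ := by
      intro a b hab
      ext S : 2
      exact congrArg Subtype.val (congrFun hab S)
    have : Module.Finite K Z := Module.Finite.of_injective φ hφ
    have : Nontrivial (Z ⧸ B.comap Z.subtype) := by
      rw [Submodule.Quotient.nontrivial_iff]
      intro htop
      have : (⟨f, hZ⟩ : Z) ∈ B.comap Z.subtype := by
        rw [htop]
        trivial
      exact hB this
    exact Module.finrank_pos.ne'
  refine key _ _ ⟨hd, hf⟩ ?_ ?_
  · rintro ⟨t, ht, htf⟩
    exact h t ht htf
  · rintro g ⟨-, hg⟩ S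
    have := ((mem_koszulPart_iff G hj g).1 hg).1 S
    rw [mem_restrictTotalDegree]
    split_ifs at this
    · exact this.totalDegree_le
    · simp [this]

/-- The upper bound, transferred from `R/I` to `I` through the exactness of `K(x; R)`. -/
lemma bettiIdeal_eq_zero_of_vanish {G : SimpleGraph (Fin n)} {r : ℕ}
    (hV : Vanish K (EdgeFam G ∅) r) {i : ℕ} {j : ℤ} (hj : (r : ℤ) + 1 < j - i) :
    bettiIdeal K n (edgeIdeal K G) i j = 0 := by
  obtain ⟨e, he⟩ : ∃ e : ℕ, j - i = ((e + 1 : ℕ) : ℤ) := ⟨(j - i - 1).toNat, by push_cast; omega⟩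
  have he' : j - ((i + 1 : ℕ) : ℤ) = e := by push_cast at he ⊢; omega
  refine bettiIdeal_eq_zero fun f hf hd => ?_
  obtain ⟨hfp, hfs⟩ := (mem_koszulPart_iff G he f).1 hf
  obtain ⟨c, hc⟩ := exists_eq_kd (Nat.succ_pos e) hfp hd
  have hc' : f = kd (proj (i + 1) e c) := by
    rw [← proj_kd, ← hc, proj_eq_self hfp]
  obtain ⟨a, b, ha, hab⟩ := hV (i + 1) e (proj (i + 1) e c) (by omega) (part_proj _ _ _)
    (by rw [← hc']; exact hfs)
  refine ⟨proj (i + 1) e a, (mem_koszulPart_iff G he' _).2 ⟨part_proj _ _ _, ha.proj _ _⟩, ?_⟩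
  rw [← proj_kd, ← proj_eq_self hfp]
  congr 1
  rw [hc', hab, map_add, kd_kd, add_zero]

lemma bettiIdeal_matching_ne_zero {G : SimpleGraph (Fin n)} {M : Finset (Sym2 (Fin n))}
    (hM : IsInducedMatching G M) {k : ℕ} (hk : M.card = k + 1) :
    bettiIdeal K n (edgeIdeal K G) k (2 * (k + 1) : ℕ) ≠ 0 := by
  classical
  obtain ⟨y, hy, hdy, -, hne⟩ := exists_matching_chain (K := K)
    (Finset.univ.filter fun x => ∃ f ∈ M, x ∈ f) M hM.2.1
    (fun e he => G.not_isDiag_of_mem_edgeSet (hM.1 he))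
    (fun e he x hx => by simpa using ⟨e, he, hx⟩)
  rw [hk] at hy
  have hj : ((2 * (k + 1) : ℕ) : ℤ) - (k : ℤ) = ((k + 1 + 1 : ℕ) : ℤ) := by push_cast; ring
  have hj' : ((2 * (k + 1) : ℕ) : ℤ) - ((k + 1 : ℕ) : ℤ) = ((k + 1 : ℕ) : ℤ) := by
    push_cast; ring
  refine bettiIdeal_ne_zero hj (f := kd y) ((mem_koszulPart_iff G hj _).2 ⟨hy.kd, ?_⟩)
    (kd_kd y) fun t ht h => ?_
  · refine hdy.mono fun _ T hT => ?_
    obtain ⟨e, he, heT⟩ := hT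
    have heG := hM.1 he
    induction e using Sym2.ind with
    | _ u v =>
      exact Or.inr ⟨u, v, heG, heT u (Sym2.mem_mk_left u v), heT v (Sym2.mem_mk_right u v)⟩
  · refine hne (Finset.card_pos.1 (by omega)) t ?_ h.symm
    -- inside the covered set, the only edges of `G` are those of `M`
    refine ((mem_koszulPart_iff G hj' t).1 ht).2.mono fun S T hT => ?_
    rcases hT with ⟨a, _, ha⟩ | ⟨u, v, huv, hu, hv⟩
    · exact absurd ha (Finset.notMem_empty a)
    · by_cases hW : T ⊆ Finset.univ.filter fun x => ∃ f ∈ M, x ∈ f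
      · refine Or.inl ⟨s(u, v), hM.2.2 _ huv fun x hx => ?_, fun x hx => ?_⟩
        · rcases Sym2.mem_iff.1 hx with rfl | rfl
          · simpa using hW hu
          · simpa using hW hv
        · rcases Sym2.mem_iff.1 hx with rfl | rfl
          · exact hu
          · exact hv
      · exact Or.inr fun h => hW h.2

end Betti

/-! ### The induced matching number and the regularity -/

lemma inducedMatchingNumber_spec {n : ℕ} (G : SimpleGraph (Fin n)) :
    (∃ M, IsInducedMatching G M ∧ M.card = inducedMatchingNumber G) ∧
      ∀ M, IsInducedMatching G M → M.card ≤ inducedMatchingNumber G := by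
  have hb : BddAbove {k : ℕ | ∃ M : Finset (Sym2 (Fin n)), IsInducedMatching G M ∧ M.card = k} := by
    refine ⟨Fintype.card (Sym2 (Fin n)), ?_⟩
    rintro _ ⟨M, _, rfl⟩
    exact Finset.card_le_univ M
  have h0 : IsInducedMatching G ∅ := by
    refine ⟨by simp, by simp, fun e _ h => ?_⟩
    induction e using Sym2.ind with
    | _ x y => simpa using h x (Sym2.mem_mk_left x y)
  have hne : {k : ℕ | ∃ M : Finset (Sym2 (Fin n)), IsInducedMatching G M ∧ M.card = k}.Nonempty :=
    ⟨0, ∅, h0, rfl⟩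
  exact ⟨Nat.sSup_mem hne hb, fun M hM => le_csSup hb ⟨M, hM, rfl⟩⟩

/-- A single edge is an induced matching. -/
lemma isInducedMatching_singleton {n : ℕ} {G : SimpleGraph (Fin n)} {e : Sym2 (Fin n)}
    (he : e ∈ G.edgeSet) : IsInducedMatching G {e} := by
  refine ⟨by simpa using he, by simp +contextual, fun f hf h => ?_⟩
  simp only [Finset.mem_singleton, exists_eq_left] at h ⊢
  induction f using Sym2.ind with
  | _ x y =>
    have hxy : x ≠ y := G.ne_of_adj hf
    exact ((Sym2.mem_and_mem_iff hxy).1 ⟨h x (Sym2.mem_mk_left x y),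
      h y (Sym2.mem_mk_right x y)⟩).symm

/-- For a forest `G` (a simple graph with no cycles) on `{1,…,n}` with at least one edge,
`reg(I(G)) = ν'(G) + 1`. -/
theorem reg_edgeIdeal_forest (K : Type*) [Field K] (n : ℕ)
    (G : SimpleGraph (Fin n)) (hforest : G.IsAcyclic) (hG : G.edgeSet.Nonempty) :
    regIdeal K n (edgeIdeal K G) = (inducedMatchingNumber G : ℤ) + 1 := by
  obtain ⟨⟨M, hM, hcard⟩, hmax⟩ := inducedMatchingNumber_spec G
  obtain ⟨e, he⟩ := hG
  have hpos : 1 ≤ inducedMatchingNumber G := by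
    simpa using hmax _ (isInducedMatching_singleton he)
  obtain ⟨k, hk⟩ : ∃ k, inducedMatchingNumber G = k + 1 := ⟨inducedMatchingNumber G - 1, by omega⟩
  refine IsGreatest.csSup_eq ⟨⟨k, (2 * (k + 1) : ℕ),
    bettiIdeal_matching_ne_zero hM (hcard.trans hk), ?_⟩, ?_⟩
  · rw [hk]
    push_cast
    ring
  · rintro d ⟨i, j, hb, rfl⟩
    by_contra hlt
    exact hb (bettiIdeal_eq_zero_of_vanish
      (vanish_forest hforest ∅ _ fun M hM _ => hmax M hM) (by omega))
end

section
/- Let P_n be the path graph on n vertices with n odd, n ≥ 3, K a field, R = K[x_1,…,x_n], J(P_n) the cover ideal, and set A = (n − 1)/2. Then for every integer t ≥ 1 with 2t + 1 ≤ n − 2, depth(R/J(P_n)^t) = A + ⌊A/(2t + 1)⌋. -/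
/-!
Write `A = (n - 1) / 2` and `p = A / (2 * t + 1)`.

*Depth.* That `R ⧸ I` has depth at least `k` is expressed by the vanishing of its Koszul cohomology
below degree `k`; the Koszul complex is built as an iterated mapping cone (`Kos`). The two agree by
`Kos.dep_iff_exists_isWeaklyRegular`. Long exact sequences then give the usual depth lemmas, and,
for monomial ideals: the exact sequence of the colon by a monomial (`depthGE_of_colon`), the fact
that colons by monomials do not lower the depth (`depthGE_colon`), and a Mayer–Vietoris bound for
sums (`depthGE_union`). The second one holds because killing a variable lowers the depth by at most
one, even if the variable is a zero divisor (`depthGE_killVar`).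

*The ideals.* An upper set `U` of exponent vectors stands for the monomial ideal `monIdeal K U`. As
the path is bipartite, `J ^ t` is spanned by the monomials whose exponents add up to at least `t` on
every edge (`coverIdeal_path_pow`). The proof works with arbitrary weights `c i` on the edges
`{i, i + 1}`, as in `edgeSet`.

*Lower bound.* Let the edges before `{k, k + 1}` have weight `0`. The colon by the variable `k + 1`
lowers the weights of the edges at `k + 1`. Modulo that variable, the ideal is a monomial multiple
of the ideal of edge weights on the vertices `≥ k + 2`, whose first weight is the difference
`c (k + 2) - c (k + 1)`. So the depth is at least the minimum of two depths of the same kind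
(`depthGE_edgeSet_step`), and an induction gives the bound `n - 1 - pdBound` for a path with first
weight `u ≤ t` and all other weights `t` (`depthGE_tail`). For `u = t` this equals `A + p`.

*Upper bound.* An explicit monomial, periodic with period `2 * t + 1`, has as colon the ideal
`⋂ (x_i, x_{i+1})` over a set of `A - p` pairwise disjoint edges. The quotient by that ideal has
depth `n - 1 - (A - p) = A + p` (`depthGE_matching`), and the depth of the colon is at least the
depth of `R ⧸ J ^ t` (`not_depthGE_path`).
-/

open MvPolynomial

/-- The maximal homogeneous ideal `(x_1,…,x_n)` of `K[x_1,…,x_n]`. -/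
noncomputable def maxIdeal (K : Type*) [Field K] (n : ℕ) : Ideal (MvPolynomial (Fin n) K) :=
  Ideal.span (Set.range (X : Fin n → MvPolynomial (Fin n) K))

/-- `depth(R/I)` with respect to the maximal homogeneous ideal: the supremum of the
lengths of `R/I`-regular sequences consisting of elements of `(x_1,…,x_n)`. -/
noncomputable def depthQuot (K : Type*) [Field K] (n : ℕ)
    (I : Ideal (MvPolynomial (Fin n) K)) : ℕ :=
  sSup {d : ℕ | ∃ rs : List (MvPolynomial (Fin n) K), rs.length = d ∧
    (∀ r ∈ rs, r ∈ maxIdeal K n) ∧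
    RingTheory.Sequence.IsRegular ((MvPolynomial (Fin n) K) ⧸ I) rs}

set_option linter.unusedSectionVars false

/-! ### Koszul cochains -/

section Koszul

variable {R : Type*} [CommRing R]

/-- The module underlying the Koszul cochain complex of a list of ring elements with
coefficients in `M`, as an iterated mapping cone: adding one element to the list doubles
the module. -/
def Kos (M : Type*) : List R → Type _
  | [] => M
  | _ :: l => Kos M l × Kos M l

noncomputable instance Kos.addCommGroup (M : Type*) [AddCommGroup M] :
    ∀ l : List R, AddCommGroup (Kos M l)
  | [] => inferInstanceAs (AddCommGroup M)
  | _ :: l =>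
    letI := Kos.addCommGroup M l
    inferInstanceAs (AddCommGroup (Kos M l × Kos M l))

noncomputable instance Kos.module (M : Type*) [AddCommGroup M] [Module R M] :
    ∀ l : List R, Module R (Kos M l)
  | [] => inferInstanceAs (Module R M)
  | _ :: l =>
    letI := Kos.module M l
    inferInstanceAs (Module R (Kos M l × Kos M l))

namespace Kos

variable {M N A B C : Type*} [AddCommGroup M] [Module R M] [AddCommGroup N] [Module R N]
  [AddCommGroup A] [Module R A] [AddCommGroup B] [Module R B] [AddCommGroup C] [Module R C]

/-- The Koszul differential; on the cone of `x` it is `(u, v) ↦ (d u, x u - d v)`. -/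
noncomputable def d : ∀ l : List R, Kos M l →+ Kos M l
  | [] => 0
  | x :: l =>
    { toFun := fun p => (d l p.1, x • p.1 - d l p.2)
      map_zero' := by
        change (d l 0, x • (0 : Kos M l) - d l 0) = (0, 0)
        simp
      map_add' := fun p q => by
        change (d l (p.1 + q.1), x • (p.1 + q.1) - d l (p.2 + q.2)) =
          (d l p.1 + d l q.1, (x • p.1 - d l p.2) + (x • q.1 - d l q.2))
        simp only [map_add, smul_add]
        congr 1
        abel }

/-- The cochains of degree `i`, with `M` itself in degree `0`. -/
noncomputable def gr : ∀ (l : List R), ℤ → Submodule R (Kos M l)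
  | [], i => (if i = 0 then (⊤ : Submodule R M) else ⊥ : Submodule R M)
  | _ :: l, i => ((gr l i).prod (gr l (i - 1)) : Submodule R (Kos M l × Kos M l))

/-- The map on Koszul cochains induced by an additive map of coefficients. -/
noncomputable def map (f : M →+ N) : ∀ l : List R, Kos M l →+ Kos N l
  | [] => f
  | _ :: l => (AddMonoidHom.prodMap (map f l) (map f l) :
      (Kos M l × Kos M l) →+ (Kos N l × Kos N l))

/-- A cochain of the mapping cone as a pair of cochains. -/
def mk (x : R) {l : List R} (u v : Kos M l) : Kos M (x :: l) := (u, v)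

lemma exists_mk {x : R} {l : List R} (p : Kos M (x :: l)) : ∃ u v, p = mk x u v := ⟨p.1, p.2, rfl⟩

lemma mk_inj {x : R} {l : List R} {u v u' v' : Kos M l} (h : mk x u v = mk x u' v') :
    u = u' ∧ v = v' := ⟨congrArg Prod.fst h, congrArg Prod.snd h⟩

lemma mk_zero (x : R) (l : List R) : mk x (0 : Kos M l) 0 = 0 := rfl

lemma d_cons (x : R) (l : List R) (u v : Kos M l) :
    d (x :: l) (mk x u v) = mk x (d l u) (x • u - d l v) := rfl

lemma mem_gr_nil (i : ℤ) (z : Kos M ([] : List R)) : z ∈ gr ([] : List R) i ↔ (i ≠ 0 → z = 0) := by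
  change z ∈ (if i = 0 then (⊤ : Submodule R M) else ⊥ : Submodule R M) ↔ _
  split_ifs with h
  · exact ⟨fun _ h' => absurd h h', fun _ => trivial⟩
  · exact ⟨fun h' _ => h', fun h' => h' h⟩

lemma smul_cons (r x : R) (l : List R) (u v : Kos M l) :
    r • mk x u v = mk x (r • u) (r • v) := rfl

lemma map_cons (f : M →+ N) (x : R) (l : List R) (u v : Kos M l) :
    map f (x :: l) (mk x u v) = mk x (map f l u) (map f l v) := rfl

lemma d_smul : ∀ (l : List R) (r : R) (z : Kos M l), d l (r • z) = r • d l z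
  | [], r, z => (smul_zero r).symm
  | x :: l, r, p => by
    obtain ⟨u, v, rfl⟩ := exists_mk p
    rw [smul_cons, d_cons, d_cons, smul_cons, d_smul l, d_smul l, smul_sub, smul_comm]

lemma d_d : ∀ (l : List R) (z : Kos M l), d l (d l z) = 0
  | [], _ => rfl
  | x :: l, p => by
    obtain ⟨u, v, rfl⟩ := exists_mk p
    rw [d_cons, d_cons, map_sub, d_d l u, d_d l v, d_smul, sub_zero, sub_self]
    rfl

lemma d_mem : ∀ (l : List R) (i : ℤ) (z : Kos M l), z ∈ gr l i → d l z ∈ gr l (i + 1)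
  | [], _, _, _ => Submodule.zero_mem _
  | x :: l, i, p, h => by
    obtain ⟨u, v, rfl⟩ := exists_mk p
    obtain ⟨hu, hv⟩ := h
    refine ⟨d_mem l i u hu, ?_⟩
    have := d_mem l _ v hv
    rw [sub_add_cancel] at this
    change x • u - d l v ∈ gr l (i + 1 - 1)
    rw [add_sub_cancel_right]
    exact Submodule.sub_mem _ (Submodule.smul_mem _ _ hu) this

lemma gr_neg : ∀ (l : List R) (i : ℤ) (z : Kos M l), i < 0 → z ∈ gr l i → z = 0
  | [], i, z, hi, h => by
    exact (mem_gr_nil i z).1 h hi.ne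
  | x :: l, i, p, hi, h => by
    obtain ⟨u, v, rfl⟩ := exists_mk p
    obtain ⟨hu, hv⟩ := h
    have h1 := gr_neg l i u hi hu
    have h2 := gr_neg l (i - 1) v (by omega) hv
    rw [h1, h2, mk_zero]

lemma map_mem (f : M →+ N) : ∀ (l : List R) (i : ℤ) (z : Kos M l),
    z ∈ gr l i → map f l z ∈ gr l i
  | [], i, z, h => by
    rw [mem_gr_nil] at h ⊢
    intro hi
    rw [h hi, map_zero]
  | x :: l, i, p, h => by
    obtain ⟨u, v, rfl⟩ := exists_mk p
    exact ⟨map_mem f l i u h.1, map_mem f l (i - 1) v h.2⟩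

lemma map_smul (f : M →+ N) (r : R) (hf : ∀ m, f (r • m) = r • f m) :
    ∀ (l : List R) (z : Kos M l), map f l (r • z) = r • map f l z
  | [], z => hf z
  | x :: l, p => by
    obtain ⟨u, v, rfl⟩ := exists_mk p
    rw [smul_cons, map_cons, map_cons, smul_cons, map_smul f r hf l, map_smul f r hf l]

lemma map_d (f : M →+ N) : ∀ (l : List R), (∀ r ∈ l, ∀ m, f (r • m) = r • f m) →
    ∀ z : Kos M l, map f l (d l z) = d l (map f l z)
  | [], _, _ => map_zero f
  | x :: l, hf, p => by
    obtain ⟨u, v, rfl⟩ := exists_mk p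
    rw [d_cons, map_cons, map_cons, d_cons, map_sub,
      map_smul f x (hf x (by simp)), map_d f l (fun r hr => hf r (by simp [hr])),
      map_d f l (fun r hr => hf r (by simp [hr]))]

lemma map_injective (f : M →+ N) (hf : Function.Injective f) :
    ∀ (l : List R), Function.Injective (map f l)
  | [] => hf
  | x :: l => by
    intro p q h
    obtain ⟨u, v, rfl⟩ := exists_mk p
    obtain ⟨u', v', rfl⟩ := exists_mk q
    rw [map_cons, map_cons] at h
    rw [map_injective f hf l (mk_inj h).1, map_injective f hf l (mk_inj h).2]

lemma map_surj (f : M →+ N) (hf : Function.Surjective f) :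
    ∀ (l : List R) (i : ℤ) (z : Kos N l), z ∈ gr l i → ∃ y ∈ gr l i, map f l y = z
  | [], i, z, h => by
    rw [mem_gr_nil] at h
    by_cases hi : i = 0
    · obtain ⟨y, hy⟩ := hf z
      exact ⟨y, (mem_gr_nil i y).2 fun h => absurd hi h, hy⟩
    · rw [h hi]
      exact ⟨0, Submodule.zero_mem _, map_zero f⟩
  | x :: l, i, p, h => by
    obtain ⟨u, v, rfl⟩ := exists_mk p
    obtain ⟨y, hy, rfl⟩ := map_surj f hf l i u h.1
    obtain ⟨y', hy', rfl⟩ := map_surj f hf l (i - 1) v h.2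
    exact ⟨mk x y y', ⟨hy, hy'⟩, rfl⟩

lemma map_exact (f : A →+ B) (g : B →+ C) (hfg : ∀ b, g b = 0 → ∃ a, f a = b) :
    ∀ (l : List R) (i : ℤ) (z : Kos B l), z ∈ gr l i → map g l z = 0 →
      ∃ y ∈ gr l i, map f l y = z
  | [], i, z, h, hz => by
    rw [mem_gr_nil] at h
    by_cases hi : i = 0
    · obtain ⟨y, hy⟩ := hfg z hz
      exact ⟨y, (mem_gr_nil i y).2 fun h => absurd hi h, hy⟩
    · rw [h hi]
      exact ⟨0, Submodule.zero_mem _, map_zero f⟩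
  | x :: l, i, p, h, hz => by
    obtain ⟨u, v, rfl⟩ := exists_mk p
    obtain ⟨y, hy, rfl⟩ := map_exact f g hfg l i u h.1 (congrArg Prod.fst hz)
    obtain ⟨y', hy', rfl⟩ := map_exact f g hfg l (i - 1) v h.2 (congrArg Prod.snd hz)
    exact ⟨mk x y y', ⟨hy, hy'⟩, rfl⟩

lemma map_comp_zero (f : A →+ B) (g : B →+ C) (h : ∀ a, g (f a) = 0) :
    ∀ (l : List R) (z : Kos A l), map g l (map f l z) = 0
  | [], z => h z
  | x :: l, p => by
    obtain ⟨u, v, rfl⟩ := exists_mk p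
    rw [map_cons, map_cons, map_comp_zero f g h l, map_comp_zero f g h l]
    rfl

lemma map_comp_id (f : A →+ B) (g : B →+ A) (h : ∀ a, g (f a) = a) :
    ∀ (l : List R) (z : Kos A l), map g l (map f l z) = z
  | [], z => h z
  | x :: l, p => by
    obtain ⟨u, v, rfl⟩ := exists_mk p
    rw [map_cons, map_cons, map_comp_id f g h l, map_comp_id f g h l]

lemma smul_eq_zero_of (r : R) (h : ∀ m : M, r • m = 0) :
    ∀ (l : List R) (z : Kos M l), r • z = 0
  | [], z => h z
  | x :: l, p => by
    obtain ⟨u, v, rfl⟩ := exists_mk p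
    rw [smul_cons, smul_eq_zero_of r h l, smul_eq_zero_of r h l]
    rfl

lemma smul_injective (r : R) (h : IsSMulRegular M r) :
    ∀ (l : List R), IsSMulRegular (Kos M l) r
  | [] => h
  | x :: l => by
    intro p q h'
    obtain ⟨u, v, rfl⟩ := exists_mk p
    obtain ⟨u', v', rfl⟩ := exists_mk q
    have h1 : u = u' := smul_injective r h l (mk_inj h').1
    have h2 : v = v' := smul_injective r h l (mk_inj h').2
    rw [h1, h2]

/-- Multiplication by a member of the list is null-homotopic. -/
lemma exists_homotopy : ∀ (l : List R) (r : R), r ∈ l →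
    ∃ h : Kos M l →+ Kos M l, (∀ (i : ℤ) (z), z ∈ gr l i → h z ∈ gr l (i - 1)) ∧
      (∀ (s : R) z, h (s • z) = s • h z) ∧ ∀ z, d l (h z) + h (d l z) = r • z
  | [], r, hr => by simp at hr
  | x :: l, r, hr => by
    rcases List.mem_cons.1 hr with rfl | hr
    · refine ⟨((AddMonoidHom.inl _ _).comp (AddMonoidHom.snd _ _) :
        (Kos M l × Kos M l) →+ (Kos M l × Kos M l)), ?_, ?_, ?_⟩
      · rintro i ⟨u, v⟩ h
        exact ⟨h.2, Submodule.zero_mem _⟩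
      · rintro s ⟨u, v⟩
        change ((s • v, 0) : Kos M l × Kos M l) = (s • v, s • 0)
        rw [smul_zero]
      · rintro ⟨u, v⟩
        change ((d l v + (r • u - d l v), r • v - d l 0 + 0) : Kos M l × Kos M l) = (r • u, r • v)
        simp
    · obtain ⟨h, h1, h2, h3⟩ := exists_homotopy l r hr
      refine ⟨(AddMonoidHom.prodMap h (-h) : (Kos M l × Kos M l) →+ (Kos M l × Kos M l)),
        ?_, ?_, ?_⟩
      · rintro i ⟨u, v⟩ hz
        exact ⟨h1 _ _ hz.1, Submodule.neg_mem _ (h1 _ _ hz.2)⟩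
      · rintro s ⟨u, v⟩
        change ((h (s • u), -h (s • v)) : Kos M l × Kos M l) = (s • h u, s • -h v)
        rw [h2, h2, smul_neg]
      · rintro ⟨u, v⟩
        change ((d l (h u) + h (d l u), x • h u - d l (-h v) + -h (x • u - d l v)) :
          Kos M l × Kos M l) = (r • u, r • v)
        rw [h3, ← h3 v, map_neg, map_sub, h2]
        congr 1
        abel

/-- The `0`-cochain given by an element of the module. -/
noncomputable def incl : ∀ l : List R, M →+ Kos M l
  | [] => AddMonoidHom.id M
  | _ :: l => ((AddMonoidHom.inl _ _).comp (incl l) : M →+ (Kos M l × Kos M l))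

lemma incl_mem : ∀ (l : List R) (m : M), incl l m ∈ gr l 0
  | [], m => by
    change m ∈ (if (0 : ℤ) = 0 then (⊤ : Submodule R M) else ⊥ : Submodule R M)
    simp
  | x :: l, m => ⟨incl_mem l m, Submodule.zero_mem _⟩

lemma incl_injective : ∀ (l : List R), Function.Injective (incl l : M →+ Kos M l)
  | [] => fun _ _ h => h
  | _ :: l => fun _ _ h => incl_injective l (congrArg Prod.fst h)

lemma incl_smul : ∀ (l : List R) (r : R) (m : M), incl l (r • m) = r • incl l m
  | [], _, _ => rfl
  | x :: l, r, m => by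
    change ((incl l (r • m), 0) : Kos M l × Kos M l) = (r • incl l m, r • 0)
    rw [incl_smul l, smul_zero]

lemma d_incl : ∀ (l : List R) (m : M), (∀ r ∈ l, r • m = 0) → d l (incl l m) = 0
  | [], _, _ => rfl
  | x :: l, m, h => by
    change ((d l (incl l m), x • incl l m - d l 0) : Kos M l × Kos M l) = (0, 0)
    rw [d_incl l m (fun r hr => h r (by simp [hr])), ← incl_smul, h x (by simp)]
    simp

/-! ### Vanishing of Koszul cohomology -/

/-- The `i`-th Koszul cohomology of `M` vanishes. -/
def Van (l : List R) (M : Type*) [AddCommGroup M] [Module R M] (i : ℤ) : Prop :=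
  ∀ z : Kos M l, z ∈ gr l i → d l z = 0 → ∃ w ∈ gr l (i - 1), d l w = z

/-- The Koszul cohomology of `M` vanishes in all degrees below `k`; for finite modules over
a noetherian ring this says that the ideal generated by `l` has grade at least `k` on `M`. -/
def Dep (l : List R) (M : Type*) [AddCommGroup M] [Module R M] (k : ℕ) : Prop :=
  ∀ i : ℤ, i < k → Van l M i

lemma Dep.mono {l : List R} {k k' : ℕ} (h : Dep l M k) (hk : k' ≤ k) : Dep l M k' :=
  fun i hi => h i (by omega)

lemma van_neg (l : List R) {i : ℤ} (hi : i < 0) : Van l M i := fun z hz _ =>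
  ⟨0, Submodule.zero_mem _, by rw [map_zero, gr_neg l i z hi hz]⟩

lemma dep_zero (l : List R) : Dep l M 0 := fun _ hi => van_neg l (by simpa using hi)

section ses

variable {l : List R} (f : A →ₗ[R] B) (g : B →ₗ[R] C) (hf : Function.Injective f)
  (hg : Function.Surjective g) (hfg : ∀ b, g b = 0 ↔ ∃ a, f a = b)

include hf hg hfg

lemma van_middle {i : ℤ} (hA : Van l A i) (hC : Van l C i) : Van l B i := by
  intro z hz hdz
  have cf := map_d (f : A →+ B) l (fun r _ m => f.map_smul r m)
  have cg := map_d (g : B →+ C) l (fun r _ m => g.map_smul r m)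
  obtain ⟨c, hc, hdc⟩ := hC _ (map_mem (g : B →+ C) l i z hz) (by rw [← cg, hdz, map_zero])
  obtain ⟨b, hb, rfl⟩ := map_surj (g : B →+ C) hg l _ c hc
  have hdb : d l b ∈ gr l i := by simpa using d_mem l _ b hb
  obtain ⟨a, ha, hfa⟩ := map_exact (f : A →+ B) (g : B →+ C) (fun b => (hfg b).1) l i (z - d l b)
    (Submodule.sub_mem _ hz hdb) (by rw [map_sub, cg, hdc, sub_self])
  obtain ⟨a', ha', rfl⟩ := hA a ha (map_injective (f : A →+ B) hf l (by
    rw [cf, hfa, map_sub, hdz, d_d, map_zero, sub_zero]))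
  refine ⟨b + map (f : A →+ B) l a', Submodule.add_mem _ hb (map_mem _ l _ _ ha'), ?_⟩
  rw [map_add, ← cf, hfa]
  abel

lemma van_left {i : ℤ} (hB : Van l B i) (hC : Van l C (i - 1)) : Van l A i := by
  intro a ha hda
  have cf := map_d (f : A →+ B) l (fun r _ m => f.map_smul r m)
  have cg := map_d (g : B →+ C) l (fun r _ m => g.map_smul r m)
  obtain ⟨b, hb, hdb⟩ := hB _ (map_mem (f : A →+ B) l i a ha) (by rw [← cf, hda, map_zero])
  have h0 := map_comp_zero (f : A →+ B) (g : B →+ C) (fun a => (hfg (f a)).2 ⟨a, rfl⟩) l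
  obtain ⟨c, hc, hdc⟩ := hC _ (map_mem (g : B →+ C) l _ b hb) (by rw [← cg, hdb, h0])
  obtain ⟨b', hb', rfl⟩ := map_surj (g : B →+ C) hg l _ c hc
  have hdb' : d l b' ∈ gr l (i - 1) := by simpa using d_mem l _ b' hb'
  obtain ⟨a', ha', hfa⟩ := map_exact (f : A →+ B) (g : B →+ C) (fun b => (hfg b).1) l _ (b - d l b')
    (Submodule.sub_mem _ hb hdb') (by rw [map_sub, cg, hdc, sub_self])
  refine ⟨a', ha', map_injective (f : A →+ B) hf l ?_⟩
  rw [cf, hfa, map_sub, d_d, hdb, sub_zero]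

lemma van_right {i : ℤ} (hB : Van l B i) (hA : Van l A (i + 1)) : Van l C i := by
  intro c hc hdc
  have cf := map_d (f : A →+ B) l (fun r _ m => f.map_smul r m)
  have cg := map_d (g : B →+ C) l (fun r _ m => g.map_smul r m)
  have h0 := map_comp_zero (f : A →+ B) (g : B →+ C) (fun a => (hfg (f a)).2 ⟨a, rfl⟩) l
  obtain ⟨b, hb, rfl⟩ := map_surj (g : B →+ C) hg l _ c hc
  obtain ⟨a, ha, hfa⟩ := map_exact (f : A →+ B) (g : B →+ C) (fun b => (hfg b).1) l _ (d l b)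
    (d_mem l _ b hb) (by rw [cg, hdc])
  obtain ⟨a', ha', rfl⟩ := hA a ha (map_injective (f : A →+ B) hf l (by
    rw [cf, hfa, d_d, map_zero]))
  rw [add_sub_cancel_right] at ha'
  obtain ⟨b', hb', hdb'⟩ := hB (b - map (f : A →+ B) l a')
    (Submodule.sub_mem _ hb (map_mem _ l _ _ ha')) (by rw [map_sub, ← cf, hfa, sub_self])
  exact ⟨map (g : B →+ C) l b', map_mem _ l _ _ hb', by rw [← cg, hdb', map_sub, h0, sub_zero]⟩

lemma dep_middle {k : ℕ} (hA : Dep l A k) (hC : Dep l C k) : Dep l B k :=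
  fun i hi => van_middle f g hf hg hfg (hA i hi) (hC i hi)

lemma dep_left {k : ℕ} (hB : Dep l B (k + 1)) (hC : Dep l C k) : Dep l A (k + 1) :=
  fun i hi => van_left f g hf hg hfg (hB i hi) (hC _ (by push_cast at hi; omega))

lemma dep_right {k : ℕ} (hB : Dep l B k) (hA : Dep l A (k + 1)) : Dep l C k :=
  fun i hi => van_right f g hf hg hfg (hB i hi) (hA _ (by push_cast; omega))

end ses

/-- Koszul cohomology is annihilated by the ideal generated by the list. -/
lemma smul_coboundary (l : List R) {r : R} (hr : r ∈ Ideal.ofList l) (i : ℤ) (z : Kos M l)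
    (hz : z ∈ gr l i) (hdz : d l z = 0) : ∃ w ∈ gr l (i - 1), d l w = r • z := by
  refine Submodule.span_induction (p := fun r _ => ∃ w ∈ gr l (i - 1), d l w = r • z)
    ?_ ?_ ?_ ?_ hr
  · intro r hr
    obtain ⟨h, h1, -, h3⟩ := exists_homotopy (M := M) l r hr
    refine ⟨h z, h1 i z hz, ?_⟩
    rw [← h3, hdz, map_zero, add_zero]
  · exact ⟨0, Submodule.zero_mem _, by rw [map_zero, zero_smul]⟩
  · rintro r s - - ⟨w, hw, h⟩ ⟨w', hw', h'⟩
    exact ⟨w + w', Submodule.add_mem _ hw hw', by rw [map_add, h, h', add_smul]⟩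
  · rintro s r - ⟨w, hw, h⟩
    exact ⟨s • w, Submodule.smul_mem _ _ hw, by rw [d_smul, h, smul_assoc]⟩

/-- Passing to the quotient by a nonzerodivisor in the ideal generated by the list lowers the
grade by exactly one. -/
lemma dep_succ_iff {l : List R} {r : R} (hr : r ∈ Ideal.ofList l) (hreg : IsSMulRegular A r)
    (g : A →ₗ[R] C) (hg : Function.Surjective g) (hrg : ∀ b, g b = 0 ↔ ∃ a, r • a = b) {k : ℕ} :
    Dep l A (k + 1) ↔ Dep l C k := by
  constructor
  · intro h
    exact dep_right (LinearMap.lsmul R A r) g hreg hg hrg (h.mono (Nat.le_succ k)) h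
  · intro h i hi z hz hdz
    have cg := map_d (g : A →+ C) l (fun r _ m => g.map_smul r m)
    obtain ⟨w, hw, hdw⟩ := smul_coboundary l hr i z hz hdz
    have h0 : ∀ y : Kos A l, map (g : A →+ C) l (r • y) = 0 := fun y => by
      rw [map_smul _ _ (fun m => g.map_smul r m)]
      exact smul_eq_zero_of r (fun c => by
        obtain ⟨a, rfl⟩ := hg c
        rw [← _root_.map_smul]
        exact (hrg _).2 ⟨a, rfl⟩) l _
    obtain ⟨c, hc, hdc⟩ := h (i - 1) (by push_cast at hi; omega) _
      (map_mem (g : A →+ C) l _ w hw) (by rw [← cg, hdw, h0])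
    obtain ⟨b, hb, rfl⟩ := map_surj (g : A →+ C) hg l _ c hc
    have hdb : d l b ∈ gr l (i - 1) := by simpa using d_mem l _ b hb
    obtain ⟨u, hu, hru⟩ := map_exact (DistribSMul.toAddMonoidHom A r) (g : A →+ C)
      (fun b => (hrg b).1) l (i - 1) (w - d l b)
      (Submodule.sub_mem _ hw hdb) (by rw [map_sub, cg, hdc, sub_self])
    have hsm : ∀ (l : List R) (y : Kos A l), map (DistribSMul.toAddMonoidHom A r) l y = r • y := by
      intro l
      induction l with
      | nil => intro y; rfl
      | cons x l ih =>
        intro p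
        obtain ⟨y, y', rfl⟩ := exists_mk p
        rw [map_cons, smul_cons, ih, ih]
    rw [hsm] at hru
    refine ⟨u, hu, smul_injective r hreg l ?_⟩
    change r • d l u = r • z
    rw [← d_smul, hru, map_sub, d_d, hdw, sub_zero]

/-- A retract-type descent: if `π : A → C` kills `x A`, is surjective, and has an additive
section commuting with the elements of `l` (but not with `x`), then the grade of the ideal
`(x, l)` drops by at most one from `A` to `C`. -/
lemma dep_retract {l : List R} {x : R} (π : A →ₗ[R] C) (s : C →+ A) (hs : ∀ c, π (s c) = c)
    (hsl : ∀ r ∈ l, ∀ c, s (r • c) = r • s c) (hx : ∀ c : C, x • c = 0) {k : ℕ}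
    (h : Dep (x :: l) A (k + 1)) : Dep (x :: l) C k := by
  have cp := map_d (π : A →+ C) l (fun r _ m => π.map_smul r m)
  have h0 := smul_eq_zero_of x hx l
  have key : ∀ i : ℤ, i < k → Van l C i := by
    intro i hi z hz hdz
    obtain ⟨p, hab, hdab⟩ := h (i + 1) (by push_cast; omega)
      (mk x 0 (map s l z))
      ⟨Submodule.zero_mem _, by rw [add_sub_cancel_right]; exact map_mem s l i z hz⟩
      (by
        rw [d_cons, ← map_d s l hsl, hdz, map_zero, map_zero, smul_zero, sub_zero]
        rfl)
    obtain ⟨a, b, rfl⟩ := exists_mk p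
    rw [d_cons] at hdab
    have h2 : x • a - d l b = map s l z := (mk_inj hdab).2
    have hb : b ∈ gr l (i - 1) := by
      have := hab.2
      rwa [add_sub_cancel_right] at this
    refine ⟨-map (π : A →+ C) l b, Submodule.neg_mem _ (map_mem _ l _ _ hb), ?_⟩
    have h3 := congrArg (map (π : A →+ C) l) h2
    rw [map_comp_id s (π : A →+ C) hs l, map_sub,
      map_smul _ _ (fun m => π.map_smul x m), h0, zero_sub, cp] at h3
    rw [map_neg, h3]
  rintro i hi p hp hd
  obtain ⟨u, v, rfl⟩ := exists_mk p
  obtain ⟨hu, hv⟩ := hp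
  rw [d_cons] at hd
  have hd1 : d l u = 0 := congrArg Prod.fst hd
  have hd2 : x • u - d l v = 0 := congrArg Prod.snd hd
  obtain ⟨w, hw, rfl⟩ := key i hi u hu hd1
  obtain ⟨w', hw', hdw'⟩ := key (i - 1) (by omega) (-v) (Submodule.neg_mem _ hv)
    (by rw [map_neg, ← sub_eq_zero.1 hd2, h0, neg_zero])
  exact ⟨mk x w w', ⟨hw, hw'⟩, by rw [d_cons, h0, hdw', zero_sub, neg_neg]⟩

open RingTheory.Sequence Pointwise in
/-- Over a noetherian ring, the vanishing range of Koszul cohomology is detected by weakly regular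
sequences in the ideal generated by the list. -/
lemma dep_iff_exists_isWeaklyRegular [IsNoetherianRing R] (l : List R) (k : ℕ) :
    ∀ (M : Type*) [AddCommGroup M] [Module R M] [Module.Finite R M], Dep l M k ↔
      ∃ rs : List R, rs.length = k ∧ (∀ r ∈ rs, r ∈ Ideal.ofList l) ∧ IsWeaklyRegular M rs := by
  induction k with
  | zero =>
    intro M _ _ _
    exact ⟨fun _ => ⟨[], rfl, by simp, IsWeaklyRegular.nil R M⟩, fun _ => dep_zero l⟩
  | succ k ih =>
    intro M _ _ _
    have quot : ∀ (r : R) (b : M), (r • (⊤ : Submodule R M)).mkQ b = 0 ↔ ∃ a, r • a = b := by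
      intro r b
      rw [Submodule.mkQ_apply, Submodule.Quotient.mk_eq_zero, Submodule.mem_smul_pointwise_iff_exists]
      simp
    constructor
    · intro h
      have hsub : Subsingleton ((R ⧸ Ideal.ofList l) →ₗ[R] M) := by
        refine subsingleton_of_forall_eq 0 fun f => ?_
        refine LinearMap.ext fun y => ?_
        obtain ⟨y, rfl⟩ := Ideal.Quotient.mk_surjective y
        have hk : ∀ r ∈ l, r • f (Ideal.Quotient.mk _ y) = 0 := by
          intro r hr
          rw [← _root_.map_smul]
          convert map_zero f
          rw [← Ideal.Quotient.mk_eq_mk, ← Submodule.Quotient.mk_smul,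
            Submodule.Quotient.mk_eq_zero, smul_eq_mul]
          exact Ideal.mul_mem_right _ _ (Ideal.subset_span hr)
        obtain ⟨w, hw, hdw⟩ := h 0 (by push_cast; omega) _ (incl_mem l _) (d_incl l _ hk)
        rw [gr_neg l _ w (by omega) hw, map_zero] at hdw
        exact incl_injective l (by rw [← hdw, LinearMap.zero_apply, map_zero])
      obtain ⟨r, hr, hreg⟩ := IsSMulRegular.subsingleton_linearMap_iff.1 hsub
      rw [Ideal.annihilator_quotient] at hr
      have h' := (dep_succ_iff hr hreg (r • (⊤ : Submodule R M)).mkQ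
        (Submodule.mkQ_surjective _) (quot r)).1 h
      obtain ⟨rs, h1, h2, h3⟩ := (ih (QuotSMulTop r M)).1 h'
      exact ⟨r :: rs, by simp [h1], by simpa [hr] using h2, IsWeaklyRegular.cons hreg h3⟩
    · rintro ⟨rs, h1, h2, h3⟩
      match rs, h1, h2, h3 with
      | r :: rs, h1, h2, h3 =>
        rw [isWeaklyRegular_cons_iff] at h3
        refine (dep_succ_iff (h2 r (by simp)) h3.1 (r • (⊤ : Submodule R M)).mkQ
          (Submodule.mkQ_surjective _) (quot r)).2 ?_
        exact (ih (QuotSMulTop r M)).2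
          ⟨rs, by simpa using h1, fun s hs => h2 s (by simp [hs]), h3.2⟩

/-- The grade only depends on the ideal generated by the list. -/
lemma dep_congr [IsNoetherianRing R] {l l' : List R} (h : Ideal.ofList l = Ideal.ofList l')
    [Module.Finite R M] {k : ℕ} (hd : Dep l M k) : Dep l' M k := by
  rw [dep_iff_exists_isWeaklyRegular] at hd ⊢
  rwa [← h]

end Kos

end Koszul

/-! ### Monomial ideals -/

section Monomial

open Kos

variable (K : Type*) [Field K] {n : ℕ}

/-- The monomial ideal spanned by the monomials with exponents in `U`. -/
noncomputable def monIdeal (U : Set (Fin n →₀ ℕ)) : Ideal (MvPolynomial (Fin n) K) :=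
  Ideal.span ((fun m => monomial m (1 : K)) '' U)

/-- The exponents of the colon by the monomial with exponent `a`. -/
def colonSet (U : Set (Fin n →₀ ℕ)) (a : Fin n →₀ ℕ) : Set (Fin n →₀ ℕ) := {m | m + a ∈ U}

/-- The list of all variables. -/
noncomputable def varList (n : ℕ) : List (MvPolynomial (Fin n) K) := (List.finRange n).map X

/-- `R ⧸ monIdeal K U` has depth at least `k` (always true for the zero module). -/
def DepthGE (U : Set (Fin n →₀ ℕ)) (k : ℕ) : Prop :=
  Dep (varList K n) (MvPolynomial (Fin n) K ⧸ monIdeal K U) k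

lemma ofList_varList : Ideal.ofList (varList K n) = maxIdeal K n := by
  unfold Ideal.ofList maxIdeal varList
  congr 1
  ext p
  simp [eq_comm]

variable {K}

lemma mem_monIdeal {U : Set (Fin n →₀ ℕ)} (hU : IsUpperSet U) {p : MvPolynomial (Fin n) K} :
    p ∈ monIdeal K U ↔ ∀ m, coeff m p ≠ 0 → m ∈ U := by
  rw [monIdeal, mem_ideal_span_monomial_image]
  simp only [mem_support_iff]
  exact ⟨fun h m hm => let ⟨s, hs, hsm⟩ := h m hm; hU hsm hs, fun h m hm => ⟨m, h m hm, le_rfl⟩⟩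

lemma isUpperSet_colonSet {U : Set (Fin n →₀ ℕ)} (hU : IsUpperSet U) (a : Fin n →₀ ℕ) :
    IsUpperSet (colonSet U a) := fun _ _ h hm => hU (add_le_add_left h a) hm

lemma monIdeal_mono {U V : Set (Fin n →₀ ℕ)} (h : U ⊆ V) : monIdeal K U ≤ monIdeal K V :=
  Ideal.span_mono (Set.image_mono h)

lemma monomial_mul_mem {U : Set (Fin n →₀ ℕ)} (hU : IsUpperSet U) (a : Fin n →₀ ℕ)
    (p : MvPolynomial (Fin n) K) :
    monomial a 1 * p ∈ monIdeal K U ↔ p ∈ monIdeal K (colonSet U a) := by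
  rw [mem_monIdeal hU, mem_monIdeal (isUpperSet_colonSet hU a)]
  constructor
  · intro h m hm
    refine h (m + a) ?_
    rw [add_comm, coeff_monomial_mul, one_mul]
    exact hm
  · intro h m hm
    rw [coeff_monomial_mul'] at hm
    split_ifs at hm with ha
    · have := h (m - a) (by simpa using hm)
      change m - a + a ∈ U at this
      rwa [tsub_add_cancel_of_le ha] at this
    · exact absurd rfl hm

lemma mem_monIdeal_union {U : Set (Fin n →₀ ℕ)} (hU : IsUpperSet U) (a : Fin n →₀ ℕ)
    (p : MvPolynomial (Fin n) K) :
    p ∈ monIdeal K (U ∪ Set.Ici a) ↔ ∃ q, p - monomial a 1 * q ∈ monIdeal K U := by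
  rw [mem_monIdeal (hU.union (isUpperSet_Ici a))]
  constructor
  · intro h
    refine ⟨p.divMonomial a, ?_⟩
    have h1 : p - monomial a 1 * p.divMonomial a = p.modMonomial a :=
      sub_eq_of_eq_add' (divMonomial_add_modMonomial p a).symm
    rw [h1, mem_monIdeal hU]
    intro m hm
    by_cases ham : a ≤ m
    · exact absurd (coeff_modMonomial_of_le p ham) hm
    · rw [coeff_modMonomial_of_not_le p ham] at hm
      exact (h m hm).resolve_right ham
  · rintro ⟨q, hq⟩ m hm
    rw [mem_monIdeal hU] at hq
    by_cases ham : a ≤ m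
    · exact Or.inr ham
    · refine Or.inl (hq m ?_)
      rwa [coeff_sub, coeff_monomial_mul', if_neg ham, sub_zero]

/-- Multiplication by a monomial, from the quotient by the colon ideal. -/
noncomputable def colonMap {U : Set (Fin n →₀ ℕ)} (hU : IsUpperSet U) (a : Fin n →₀ ℕ) :
    (MvPolynomial (Fin n) K ⧸ monIdeal K (colonSet U a)) →ₗ[MvPolynomial (Fin n) K]
      (MvPolynomial (Fin n) K ⧸ monIdeal K U) :=
  Submodule.mapQ _ _ (LinearMap.mulLeft (MvPolynomial (Fin n) K) (monomial a (1 : K)))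
    fun p hp => (monomial_mul_mem hU a p).2 hp

/-- The quotient map between quotients by monomial ideals. -/
noncomputable def quotMap {U V : Set (Fin n →₀ ℕ)} (h : U ⊆ V) :
    (MvPolynomial (Fin n) K ⧸ monIdeal K U) →ₗ[MvPolynomial (Fin n) K]
      (MvPolynomial (Fin n) K ⧸ monIdeal K V) :=
  Submodule.factor (monIdeal_mono h)

lemma colonMap_mk {U : Set (Fin n →₀ ℕ)} (hU : IsUpperSet U) (a : Fin n →₀ ℕ)
    (p : MvPolynomial (Fin n) K) : colonMap hU a (Submodule.Quotient.mk p) =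
      Submodule.Quotient.mk (monomial a 1 * p) := rfl

lemma quotMap_mk {U V : Set (Fin n →₀ ℕ)} (h : U ⊆ V) (p : MvPolynomial (Fin n) K) :
    quotMap h (Submodule.Quotient.mk p : MvPolynomial (Fin n) K ⧸ monIdeal K U) =
      Submodule.Quotient.mk p := rfl

lemma quotMap_surjective {U V : Set (Fin n →₀ ℕ)} (h : U ⊆ V) :
    Function.Surjective (quotMap (K := K) h) := by
  intro y
  obtain ⟨p, rfl⟩ := Submodule.Quotient.mk_surjective _ y
  exact ⟨Submodule.Quotient.mk p, rfl⟩

lemma colonMap_injective {U : Set (Fin n →₀ ℕ)} (hU : IsUpperSet U) (a : Fin n →₀ ℕ) :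
    Function.Injective (colonMap (K := K) hU a) := by
  rw [injective_iff_map_eq_zero]
  intro y hy
  obtain ⟨p, rfl⟩ := Submodule.Quotient.mk_surjective _ y
  rw [colonMap_mk, Submodule.Quotient.mk_eq_zero, monomial_mul_mem hU] at hy
  rwa [Submodule.Quotient.mk_eq_zero]

lemma colonMap_exact {U : Set (Fin n →₀ ℕ)} (hU : IsUpperSet U) (a : Fin n →₀ ℕ)
    (b : MvPolynomial (Fin n) K ⧸ monIdeal K U) :
    quotMap (K := K) (Set.subset_union_left (s := U) (t := Set.Ici a)) b = 0 ↔
      ∃ y, colonMap hU a y = b := by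
  obtain ⟨p, rfl⟩ := Submodule.Quotient.mk_surjective _ b
  rw [quotMap_mk, Submodule.Quotient.mk_eq_zero, mem_monIdeal_union hU]
  constructor
  · rintro ⟨q, hq⟩
    exact ⟨Submodule.Quotient.mk q, ((Submodule.Quotient.eq _).2 hq).symm⟩
  · rintro ⟨y, hy⟩
    obtain ⟨q, rfl⟩ := Submodule.Quotient.mk_surjective _ y
    exact ⟨q, (Submodule.Quotient.eq _).1 hy.symm⟩

lemma DepthGE.mono {U : Set (Fin n →₀ ℕ)} {k k' : ℕ} (h : DepthGE K U k) (hk : k' ≤ k) :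
    DepthGE K U k' := Dep.mono h hk

lemma depthGE_of_colon {U : Set (Fin n →₀ ℕ)} (hU : IsUpperSet U) (a : Fin n →₀ ℕ) {k : ℕ}
    (h1 : DepthGE K (colonSet U a) k) (h2 : DepthGE K (U ∪ Set.Ici a) k) : DepthGE K U k :=
  dep_middle (colonMap hU a) (quotMap Set.subset_union_left) (colonMap_injective hU a)
    (quotMap_surjective _) (colonMap_exact hU a) h1 h2

lemma depthGE_colon_of {U : Set (Fin n →₀ ℕ)} (hU : IsUpperSet U) (a : Fin n →₀ ℕ) {k : ℕ}
    (h1 : DepthGE K U (k + 1)) (h2 : DepthGE K (U ∪ Set.Ici a) k) :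
    DepthGE K (colonSet U a) (k + 1) :=
  dep_left (colonMap hU a) (quotMap Set.subset_union_left) (colonMap_injective hU a)
    (quotMap_surjective _) (colonMap_exact hU a) h1 h2

lemma depthGE_union_of {U : Set (Fin n →₀ ℕ)} (hU : IsUpperSet U) (a : Fin n →₀ ℕ) {k : ℕ}
    (h1 : DepthGE K U k) (h2 : DepthGE K (colonSet U a) (k + 1)) :
    DepthGE K (U ∪ Set.Ici a) k :=
  dep_right (colonMap hU a) (quotMap Set.subset_union_left) (colonMap_injective hU a)
    (quotMap_surjective _) (colonMap_exact hU a) h1 h2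

lemma X_mem_ofList (i : Fin n) : (X i : MvPolynomial (Fin n) K) ∈ Ideal.ofList (varList K n) := by
  rw [ofList_varList]
  exact Ideal.subset_span ⟨i, rfl⟩

/-- If `x_i` is a nonzerodivisor modulo a monomial ideal, killing it lowers the depth by one. -/
lemma depthGE_succ_iff {U : Set (Fin n →₀ ℕ)} (hU : IsUpperSet U) (i : Fin n)
    (hi : ∀ m, m + Finsupp.single i 1 ∈ U → m ∈ U) {k : ℕ} :
    DepthGE K U (k + 1) ↔ DepthGE K (U ∪ Set.Ici (Finsupp.single i 1)) k := by
  have hc : colonSet U (Finsupp.single i 1) = U :=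
    Set.Subset.antisymm hi fun m hm => hU le_self_add hm
  have hsm : ∀ y : MvPolynomial (Fin n) K ⧸ monIdeal K U, ∀ p,
      y = Submodule.Quotient.mk p → (X i : MvPolynomial (Fin n) K) • y =
        Submodule.Quotient.mk (monomial (Finsupp.single i 1) 1 * p) := by
    rintro y p rfl
    rfl
  refine dep_succ_iff (X_mem_ofList i) ?_ (quotMap Set.subset_union_left)
    (quotMap_surjective _) ?_
  · rw [isSMulRegular_iff_right_eq_zero_of_smul]
    intro y hy
    obtain ⟨p, rfl⟩ := Submodule.Quotient.mk_surjective _ y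
    rw [hsm _ p rfl, Submodule.Quotient.mk_eq_zero, monomial_mul_mem hU, hc] at hy
    rwa [Submodule.Quotient.mk_eq_zero]
  · intro b
    rw [colonMap_exact hU]
    constructor
    · rintro ⟨y, rfl⟩
      obtain ⟨p, rfl⟩ := Submodule.Quotient.mk_surjective _ y
      exact ⟨Submodule.Quotient.mk p, rfl⟩
    · rintro ⟨y, rfl⟩
      obtain ⟨p, rfl⟩ := Submodule.Quotient.mk_surjective _ y
      exact ⟨Submodule.Quotient.mk p, rfl⟩

/-- Substituting `0` for `x_i`. -/
noncomputable def killVar (i : Fin n) : MvPolynomial (Fin n) K →ₐ[K] MvPolynomial (Fin n) K :=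
  aeval fun j => if j = i then 0 else X j

lemma killVar_mem (U : Set (Fin n →₀ ℕ)) (i : Fin n) {p : MvPolynomial (Fin n) K}
    (hp : p ∈ monIdeal K U) : killVar i p ∈ monIdeal K U := by
  have : monIdeal K U ≤ (monIdeal K U).comap (killVar i : _ →ₐ[K] MvPolynomial (Fin n) K) := by
    refine Ideal.span_le.2 ?_
    rintro _ ⟨m, hm, rfl⟩
    change killVar i (monomial m 1) ∈ monIdeal K U
    by_cases h : m i = 0
    · have : killVar i (monomial m (1 : K)) = monomial m 1 := by
        rw [killVar, aeval_monomial, monomial_eq, map_one, C_1, one_mul, one_mul]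
        refine Finset.prod_congr rfl fun j hj => ?_
        beta_reduce
        rw [if_neg]
        rintro rfl
        exact (Finsupp.mem_support_iff.1 hj) h
      rw [this]
      exact Ideal.subset_span (Set.mem_image_of_mem _ hm)
    · convert Submodule.zero_mem _
      rw [killVar, aeval_monomial, Finsupp.prod, Finset.prod_eq_zero (i := i), mul_zero]
      · simpa using h
      · simp [h]
  exact this hp

lemma sub_killVar_mem (i : Fin n) (p : MvPolynomial (Fin n) K) :
    killVar i p - p ∈ Ideal.span {(X i : MvPolynomial (Fin n) K)} := by
  rw [← Ideal.Quotient.mk_eq_mk_iff_sub_mem]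
  have : (Ideal.Quotient.mkₐ K (Ideal.span {(X i : MvPolynomial (Fin n) K)})).comp (killVar i) =
      Ideal.Quotient.mkₐ K (Ideal.span {(X i : MvPolynomial (Fin n) K)}) := by
    ext j
    by_cases h : j = i
    · subst h
      simp [killVar, eq_comm]
    · simp [killVar, h]
  exact DFunLike.congr_fun this p

/-- Killing a variable lowers the depth of a quotient by a monomial ideal by at most one, even
when the variable is a zero divisor: substituting `0` for the variable splits the projection,
linearly over the other variables. -/
lemma depthGE_killVar {U : Set (Fin n →₀ ℕ)} (hU : IsUpperSet U) (i : Fin n) {k : ℕ}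
    (h : DepthGE K U (k + 1)) : DepthGE K (U ∪ Set.Ici (Finsupp.single i 1)) k := by
  set l : List (MvPolynomial (Fin n) K) := (Finset.univ.erase i).toList.map X with hl
  have hspan : Ideal.ofList (varList K n) = Ideal.ofList (X i :: l) := by
    unfold Ideal.ofList varList
    congr 1
    ext p
    simp only [List.mem_map, List.mem_finRange, true_and, List.mem_cons, hl, Finset.mem_toList,
      Finset.mem_erase, Finset.mem_univ, and_true, Set.mem_ofPred_eq]
    constructor
    · rintro ⟨j, rfl⟩
      by_cases hj : j = i
      · exact Or.inl (by rw [hj])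
      · exact Or.inr ⟨j, hj, rfl⟩
    · rintro (rfl | ⟨j, -, rfl⟩)
      · exact ⟨i, rfl⟩
      · exact ⟨j, rfl⟩
  have hX : (X i : MvPolynomial (Fin n) K) ∈ monIdeal K (U ∪ Set.Ici (Finsupp.single i 1)) :=
    Ideal.subset_span ⟨Finsupp.single i 1, Or.inr (Set.mem_Ici.2 le_rfl), rfl⟩
  have hs : ∀ p ∈ monIdeal K (U ∪ Set.Ici (Finsupp.single i 1)), killVar i p ∈ monIdeal K U := by
    intro p hp
    obtain ⟨q, hq⟩ := (mem_monIdeal_union hU _ p).1 hp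
    have := killVar_mem U i hq
    rw [map_sub, map_mul] at this
    have h0 : killVar (K := K) i (monomial (Finsupp.single i 1) 1) = 0 := by
      change killVar i (X i) = 0
      simp [killVar]
    rwa [h0, zero_mul, sub_zero] at this
  refine dep_congr hspan.symm ?_
  refine dep_retract (quotMap Set.subset_union_left)
    ((QuotientAddGroup.lift (monIdeal K (U ∪ Set.Ici (Finsupp.single i 1))).toAddSubgroup
      ((Submodule.mkQ (monIdeal K U)).toAddMonoidHom.comp (killVar i : _ →ₐ[K] _).toRingHom.toAddMonoidHom)
      fun p hp => (Submodule.Quotient.mk_eq_zero _).2 (hs p hp)))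
    ?_ ?_ ?_ (dep_congr hspan h)
  · intro c
    obtain ⟨p, rfl⟩ := Submodule.Quotient.mk_surjective _ c
    refine (Submodule.Quotient.eq _).2 ?_
    exact Ideal.span_le.2 (by simpa using hX) (sub_killVar_mem i p)
  · intro r hr c
    obtain ⟨p, rfl⟩ := Submodule.Quotient.mk_surjective _ c
    simp only [hl, List.mem_map, Finset.mem_toList, Finset.mem_erase, Finset.mem_univ,
      and_true] at hr
    obtain ⟨j, hj, rfl⟩ := hr
    change (Submodule.Quotient.mk (killVar i (X j * p)) : MvPolynomial (Fin n) K ⧸ monIdeal K U) =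
      Submodule.Quotient.mk (X j * killVar i p)
    rw [map_mul]
    congr 2
    simp [killVar, hj]
  · intro c
    obtain ⟨p, rfl⟩ := Submodule.Quotient.mk_surjective _ c
    exact (Submodule.Quotient.mk_eq_zero _).2 (Ideal.mul_mem_right _ _ hX)

/-- The depth does not decrease under the colon by a monomial. -/
lemma depthGE_colon (a : Fin n →₀ ℕ) : ∀ {U : Set (Fin n →₀ ℕ)}, IsUpperSet U → ∀ {k : ℕ},
    DepthGE K U k → DepthGE K (colonSet U a) k := by
  have hadd : ∀ (U : Set (Fin n →₀ ℕ)) (a b : Fin n →₀ ℕ),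
      colonSet U (a + b) = colonSet (colonSet U b) a := by
    intro U a b
    ext m
    simp [colonSet, add_assoc]
  have hzero : ∀ U : Set (Fin n →₀ ℕ), colonSet U 0 = U := fun U => by simp [colonSet]
  induction a using Finsupp.induction_linear with
  | zero =>
    intro U hU k h
    rwa [hzero]
  | add a b iha ihb =>
    intro U hU k h
    rw [hadd]
    exact iha (isUpperSet_colonSet hU b) (ihb hU h)
  | single i b =>
    induction b with
    | zero =>
      intro U hU k h
      rwa [Finsupp.single_zero, hzero]
    | succ b ih =>
      intro U hU k h
      rw [Finsupp.single_add, hadd]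
      refine ih (isUpperSet_colonSet hU _) ?_
      cases k with
      | zero => exact dep_zero _
      | succ k => exact depthGE_colon_of hU _ h (depthGE_killVar hU i h)

/-- A depth bound for a sum of two monomial ideals `I` and `J`, from the exact sequence
`0 → R ⧸ I ∩ J → R ⧸ I × R ⧸ J → R ⧸ I + J → 0`. -/
lemma depthGE_union {U V : Set (Fin n →₀ ℕ)} (hU : IsUpperSet U) (hV : IsUpperSet V) {k : ℕ}
    (h : DepthGE K (U ∩ V) (k + 1)) (h1 : DepthGE K U k) (h2 : DepthGE K V k) :
    DepthGE K (U ∪ V) k := by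
  have hB : Dep (varList K n) ((MvPolynomial (Fin n) K ⧸ monIdeal K U) ×
      (MvPolynomial (Fin n) K ⧸ monIdeal K V)) k :=
    dep_middle (LinearMap.inl _ _ _) (LinearMap.snd _ _ _) LinearMap.inl_injective
      LinearMap.snd_surjective (by
        rintro ⟨x, y⟩
        constructor
        · intro h
          exact ⟨x, Prod.ext rfl (Eq.symm h)⟩
        · rintro ⟨a, h⟩
          exact (congrArg Prod.snd h).symm) h1 h2
  refine dep_right ((quotMap Set.inter_subset_left).prod (quotMap Set.inter_subset_right))
    ((quotMap Set.subset_union_left).comp (LinearMap.fst _ _ _) -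
      (quotMap Set.subset_union_right).comp (LinearMap.snd _ _ _)) ?_ ?_ ?_ hB h
  · rw [injective_iff_map_eq_zero]
    intro y hy
    obtain ⟨p, rfl⟩ := Submodule.Quotient.mk_surjective _ y
    have e1 := (Submodule.Quotient.mk_eq_zero _).1 (congrArg Prod.fst hy)
    have e2 := (Submodule.Quotient.mk_eq_zero _).1 (congrArg Prod.snd hy)
    rw [mem_monIdeal hU] at e1
    rw [mem_monIdeal hV] at e2
    rw [Submodule.Quotient.mk_eq_zero, mem_monIdeal (hU.inter hV)]
    exact fun m hm => ⟨e1 m hm, e2 m hm⟩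
  · intro y
    obtain ⟨p, rfl⟩ := Submodule.Quotient.mk_surjective _ y
    refine ⟨(Submodule.Quotient.mk p, 0), ?_⟩
    rw [LinearMap.sub_apply, LinearMap.comp_apply, LinearMap.comp_apply, LinearMap.snd_apply,
      map_zero, sub_zero]
    rfl
  · rintro ⟨x, y⟩
    obtain ⟨p, rfl⟩ := Submodule.Quotient.mk_surjective _ x
    obtain ⟨q, rfl⟩ := Submodule.Quotient.mk_surjective _ y
    constructor
    · intro h
      have h' : p - q ∈ monIdeal K (U ∪ V) := (Submodule.Quotient.eq _).1 (sub_eq_zero.1 h)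
      rw [monIdeal, Set.image_union, Ideal.span_union] at h'
      obtain ⟨u, hu, v, hv, huv⟩ := Submodule.mem_sup.1 h'
      refine ⟨Submodule.Quotient.mk (p - u), Prod.ext ((Submodule.Quotient.eq _).2 ?_)
        ((Submodule.Quotient.eq _).2 ?_)⟩
      · change p - u - p ∈ _
        rw [sub_sub_cancel_left]
        exact Submodule.neg_mem _ hu
      · have : p - u - q = v := by linear_combination -huv
        change p - u - q ∈ _
        rw [this]
        exact hv
    · rintro ⟨z, hz⟩
      obtain ⟨r, rfl⟩ := Submodule.Quotient.mk_surjective _ z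
      have e1 := congrArg Prod.fst hz
      have e2 := congrArg Prod.snd hz
      change Submodule.Quotient.mk r = Submodule.Quotient.mk p at e1
      change Submodule.Quotient.mk r = Submodule.Quotient.mk q at e2
      rw [LinearMap.sub_apply, LinearMap.comp_apply, LinearMap.comp_apply]
      simp only [LinearMap.fst_apply, LinearMap.snd_apply]
      rw [← e1, ← e2, quotMap_mk, quotMap_mk, sub_self]

lemma depthGE_univ (k : ℕ) : DepthGE K (Set.univ : Set (Fin n →₀ ℕ)) k := by
  have h : monIdeal K (Set.univ : Set (Fin n →₀ ℕ)) = ⊤ :=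
    Ideal.eq_top_of_isUnit_mem _ (Ideal.subset_span ⟨0, trivial, rfl⟩) (by simp)
  intro i _ z _ _
  refine ⟨0, Submodule.zero_mem _, ?_⟩
  rw [map_zero, ← one_smul (MvPolynomial (Fin n) K) z]
  refine (smul_eq_zero_of _ (fun m => ?_) _ z).symm
  obtain ⟨p, rfl⟩ := Submodule.Quotient.mk_surjective _ m
  rw [one_smul, Submodule.Quotient.mk_eq_zero, h]
  trivial

/-- The depth of the quotient by the ideal generated by the variables in `S` is `n - |S|`. -/
lemma depthGE_vars (j : ℕ) : ∀ S : Finset (Fin n), S.card + j = n →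
    DepthGE K {m | ∃ i ∈ S, 0 < m i} j ∧ ¬ DepthGE K {m | ∃ i ∈ S, 0 < m i} (j + 1) := by
  have hup : ∀ S : Finset (Fin n), IsUpperSet {m : Fin n →₀ ℕ | ∃ i ∈ S, 0 < m i} := by
    rintro S a b hab ⟨i, hi, h⟩
    exact ⟨i, hi, h.trans_le (hab i)⟩
  induction j with
  | zero =>
    intro S hS
    obtain rfl : S = Finset.univ := (Finset.card_eq_iff_eq_univ S).1 (by simpa using hS)
    refine ⟨dep_zero _, fun h => ?_⟩
    set y : MvPolynomial (Fin n) K ⧸ monIdeal K {m : Fin n →₀ ℕ | ∃ i ∈ Finset.univ, 0 < m i} :=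
      Submodule.Quotient.mk 1
    have hy : ∀ r ∈ varList K n, r • y = 0 := by
      intro r hr
      obtain ⟨i, -, rfl⟩ := List.mem_map.1 hr
      refine (Submodule.Quotient.mk_eq_zero _).2 ?_
      change X i * 1 ∈ _
      rw [mul_one]
      exact Ideal.subset_span ⟨Finsupp.single i 1, ⟨i, Finset.mem_univ i, by simp⟩, rfl⟩
    obtain ⟨w, hw, hdw⟩ := h 0 (by simp) _ (incl_mem _ y) (d_incl _ y hy)
    rw [gr_neg _ _ w (by omega) hw, map_zero] at hdw
    have hy0 : y = 0 := incl_injective (varList K n) (by rw [← hdw, map_zero])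
    have := (Submodule.Quotient.mk_eq_zero _).1 hy0
    rw [mem_monIdeal (hup _)] at this
    obtain ⟨i, -, hi⟩ := this 0 (by simp)
    simp at hi
  | succ j ih =>
    intro S hS
    obtain ⟨i, hi⟩ : ∃ i, i ∉ S := by
      by_contra! hall
      have : S = Finset.univ := Finset.eq_univ_of_forall hall
      rw [this, Finset.card_univ, Fintype.card_fin] at hS
      omega
    have key : ∀ k, DepthGE K {m : Fin n →₀ ℕ | ∃ i ∈ S, 0 < m i} (k + 1) ↔
        DepthGE K {m : Fin n →₀ ℕ | ∃ j ∈ insert i S, 0 < m j} k := by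
      intro k
      rw [depthGE_succ_iff (hup S) i]
      · congr! 1
        ext m
        simp only [Set.mem_union, Set.mem_ofPred_eq, Set.mem_Ici, Finset.mem_insert,
          exists_eq_or_imp, Finsupp.single_le_iff, Nat.one_le_iff_ne_zero, Nat.pos_iff_ne_zero]
        exact or_comm
      · rintro m ⟨j, hj, h⟩
        refine ⟨j, hj, ?_⟩
        rwa [Finsupp.add_apply, Finsupp.single_eq_of_ne (by rintro rfl; exact hi hj),
          add_zero] at h
    rw [key, key]
    exact ih _ (by rw [Finset.card_insert_of_notMem hi]; omega)

lemma depthGE_Ici {k : ℕ} (hk : k + 1 ≤ n) (a : Fin n →₀ ℕ) : DepthGE K (Set.Ici a) k := by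
  have h0 := (depthGE_vars (K := K) n (∅ : Finset (Fin n)) (by simp)).1
  have he : {m : Fin n →₀ ℕ | ∃ i ∈ (∅ : Finset (Fin n)), 0 < m i} = ∅ := by
    ext m; simp
  rw [he] at h0
  have := depthGE_union_of (K := K) (U := ∅) isUpperSet_empty a (k := k)
    (h0.mono (by omega)) (h0.mono hk)
  rwa [Set.empty_union] at this

end Monomial

/-! ### Weighted edge conditions on a path -/

section Path

open Kos

variable {K : Type*} [Field K] {n : ℕ}

/-- The `i`-th exponent of `m`, with value `0` for `i ≥ n`. -/
def ev (m : Fin n →₀ ℕ) (i : ℕ) : ℕ := if h : i < n then m ⟨i, h⟩ else 0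

/-- The exponent vector with entries `f 0, …, f (n - 1)`. -/
noncomputable def ofFun (f : ℕ → ℕ) : Fin n →₀ ℕ := Finsupp.equivFunOnFinite.symm fun i => f i

/-- The exponent vectors whose sum over each edge `{i, i + 1}` of the path is at least `c i`. -/
def edgeSet (n : ℕ) (c : ℕ → ℕ) : Set (Fin n →₀ ℕ) :=
  {m | ∀ i, i + 1 < n → c i ≤ ev m i + ev m (i + 1)}

lemma ev_add (m m' : Fin n →₀ ℕ) (i : ℕ) : ev (m + m') i = ev m i + ev m' i := by
  unfold ev; split_ifs <;> simp

lemma ev_mono {m m' : Fin n →₀ ℕ} (h : m ≤ m') (i : ℕ) : ev m i ≤ ev m' i := by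
  unfold ev
  split_ifs
  · exact h _
  · exact le_rfl

lemma ev_ofFun (f : ℕ → ℕ) {i : ℕ} (h : i < n) : ev (ofFun f : Fin n →₀ ℕ) i = f i := by
  simp [ev, ofFun, h]

lemma ev_single (j : Fin n) (b i : ℕ) :
    ev (Finsupp.single j b) i = if i = j then b else 0 := by
  unfold ev
  by_cases h : i < n
  · simp only [h, dite_true, Finsupp.single_apply, Fin.ext_iff, eq_comm]
  · rw [dif_neg h, if_neg]
    omega

lemma le_iff_ev {m m' : Fin n →₀ ℕ} : m ≤ m' ↔ ∀ i < n, ev m i ≤ ev m' i := by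
  constructor
  · exact fun h i _ => ev_mono h i
  · intro h i
    simpa [ev] using h i i.2

lemma single_le_iff_ev {j : Fin n} {m : Fin n →₀ ℕ} : Finsupp.single j 1 ≤ m ↔ 1 ≤ ev m j := by
  simp [ev, Finsupp.single_le_iff]

lemma isUpperSet_edgeSet (c : ℕ → ℕ) : IsUpperSet (edgeSet n c) := fun _ _ h hm i hi =>
  (hm i hi).trans (add_le_add (ev_mono h _) (ev_mono h _))

lemma edgeSet_congr {c c' : ℕ → ℕ} (h : ∀ i, i + 1 < n → c i = c' i) :
    edgeSet n c = edgeSet n c' := by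
  ext m
  exact forall₂_congr fun i hi => by rw [h i hi]

lemma colonSet_edgeSet (c : ℕ → ℕ) (a : Fin n →₀ ℕ) :
    colonSet (edgeSet n c) a = edgeSet n fun i => c i - (ev a i + ev a (i + 1)) := by
  ext m
  refine forall₂_congr fun i hi => ?_
  rw [ev_add, ev_add]
  beta_reduce
  omega

/-! ### Powers of the cover ideal of a path -/

lemma coverIdeal_path_le : coverIdeal K (SimpleGraph.pathGraph n) ≤
    monIdeal K (edgeSet n fun _ => 1) := by
  intro p hp
  rw [mem_monIdeal (isUpperSet_edgeSet _)]
  intro m hm i hi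
  simp only [coverIdeal, Submodule.mem_iInf] at hp
  have h := hp ⟨i, by omega⟩ ⟨i + 1, hi⟩ (SimpleGraph.pathGraph_adj.2 (Or.inl rfl))
  rw [← Set.image_pair, mem_ideal_span_X_image] at h
  obtain ⟨j, hj, hmj⟩ := h m (mem_support_iff.2 hm)
  have h1 : i < n := by omega
  rcases hj with rfl | rfl
  · simp only [ev, h1, dite_true]
    omega
  · simp only [ev, hi, dite_true]
    omega

lemma monomial_mem_coverIdeal {m : Fin n →₀ ℕ} (hm : m ∈ edgeSet n fun _ => 1) :
    monomial m (1 : K) ∈ coverIdeal K (SimpleGraph.pathGraph n) := by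
  simp only [coverIdeal, Submodule.mem_iInf]
  have key : ∀ u v : Fin n, u.val + 1 = v.val → m u ≠ 0 ∨ m v ≠ 0 := by
    intro u v huv
    have := hm u (by omega)
    rw [huv] at this
    simp only [ev, u.2, v.2, dite_true, Fin.eta] at this
    omega
  intro u v huv
  rw [← Set.image_pair, mem_ideal_span_X_image]
  intro m' hm'
  rw [mem_support_iff, coeff_monomial] at hm'
  obtain rfl : m = m' := by
    by_contra h
    exact hm' (if_neg h)
  rcases SimpleGraph.pathGraph_adj.1 huv with h | h
  · rcases key u v h with h | h
    exacts [⟨u, by simp, h⟩, ⟨v, by simp, h⟩]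
  · rcases key v u h with h | h
    exacts [⟨v, by simp, h⟩, ⟨u, by simp, h⟩]

/-- Powers of the cover ideal of a path coincide with its symbolic powers. -/
lemma coverIdeal_path_pow (t : ℕ) : coverIdeal K (SimpleGraph.pathGraph n) ^ t =
    monIdeal K (edgeSet n fun _ => t) := by
  induction t with
  | zero =>
    rw [pow_zero, Ideal.one_eq_top, eq_comm]
    exact Ideal.eq_top_of_isUnit_mem _
      (Ideal.subset_span ⟨0, fun _ _ => Nat.zero_le _, rfl⟩) (by simp)
  | succ s ih =>
    rw [pow_succ, ih]
    apply le_antisymm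
    · refine (Ideal.mul_mono_right coverIdeal_path_le).trans ?_
      rw [monIdeal, monIdeal, Ideal.span_mul_span', Ideal.span_le]
      rintro _ ⟨_, ⟨m, hm, rfl⟩, _, ⟨m', hm', rfl⟩, rfl⟩
      refine Ideal.subset_span ⟨m + m', fun i hi => ?_, ?_⟩
      · have := hm i hi
        have := hm' i hi
        rw [ev_add, ev_add]
        beta_reduce at *
        omega
      · simp [monomial_mul]
    · refine Ideal.span_le.2 ?_
      rintro _ ⟨m, hm, rfl⟩
      -- Take one unit off `m` at the even vertices in its support, and at the odd vertices
      -- where the exponent is at least `s + 1`.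
      obtain ⟨m₁, hev⟩ : ∃ m₁ : Fin n →₀ ℕ, ∀ i < n, ev m₁ i = if i % 2 = 0 then
          (if 1 ≤ ev m i then 1 else 0) else (if s + 1 ≤ ev m i then 1 else 0) :=
        ⟨ofFun _, fun i hi => ev_ofFun _ hi⟩
      have hle : m₁ ≤ m := by
        rw [le_iff_ev]
        intro i hi
        rw [hev i hi]
        split_ifs <;> omega
      obtain ⟨m₂, rfl⟩ := exists_add_of_le hle
      have hsplit : monomial (m₁ + m₂) (1 : K) = monomial m₂ 1 * monomial m₁ 1 := by
        rw [monomial_mul, one_mul, add_comm]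
      change monomial (m₁ + m₂) (1 : K) ∈ _
      rw [hsplit]
      have h12 : ∀ i, i + 1 < n → 1 ≤ ev m₁ i + ev m₁ (i + 1) ∧
          s ≤ ev m₂ i + ev m₂ (i + 1) := by
        intro i hi
        have h1 := hev i (by omega)
        have h2 := hev (i + 1) hi
        have h3 : s + 1 ≤ _ := hm i hi
        rw [ev_add, ev_add] at h3
        rw [ev_add] at h1 h2
        rcases Nat.mod_two_eq_zero_or_one i with h | h
        · have h' : ¬ (i + 1) % 2 = 0 := by omega
          rw [if_pos h] at h1
          rw [if_neg h'] at h2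
          split_ifs at h1 h2 <;> omega
        · have h' : (i + 1) % 2 = 0 := by omega
          rw [if_neg (by omega)] at h1
          rw [if_pos h'] at h2
          split_ifs at h1 h2 <;> omega
      exact Ideal.mul_mem_mul (Ideal.subset_span ⟨m₂, fun i hi => (h12 i hi).2, rfl⟩)
        (monomial_mem_coverIdeal fun i hi => (h12 i hi).1)

/-! ### The lower bound -/

/-- If the edges before `{k, k + 1}` carry no condition, then modulo the variable `k + 1` the ideal
of the edge conditions `c` becomes a monomial multiple of the ideal of edge conditions on the
vertices `≥ k + 2`, where the weight of the first edge is lowered by `c (k + 1)`. -/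
lemma depthGE_edgeSet_union {c : ℕ → ℕ} {k : ℕ} (hk : k + 1 < n) (hc : ∀ i < k, c i = 0) {D : ℕ}
    (hD : D + 2 ≤ n)
    (h : DepthGE K (edgeSet n fun i => if i < k + 2 then 0 else
      if i = k + 2 then c (k + 2) - c (k + 1) else c i) (D + 1)) :
    DepthGE K (edgeSet n c ∪ Set.Ici (Finsupp.single ⟨k + 1, hk⟩ 1)) D := by
  set f : Fin n →₀ ℕ := ofFun fun i => if i = k then c k else if i = k + 2 then c (k + 1) else 0
  have hf : ∀ i < n, ev f i = if i = k then c k else if i = k + 2 then c (k + 1) else 0 :=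
    fun i hi => ev_ofFun _ hi
  -- `W` is the set of exponents that stay in `edgeSet n c` when coordinate `k + 1` is set to zero.
  set W : Set (Fin n →₀ ℕ) := {m | ∀ i, i + 1 < n → c i ≤
    (if i = k + 1 then 0 else ev m i) + (if i + 1 = k + 1 then 0 else ev m (i + 1))} with hW
  have hWup : IsUpperSet W := by
    intro m m' h hm i hi
    refine (hm i hi).trans (add_le_add ?_ ?_) <;> split_ifs <;>
      first | exact le_rfl | exact ev_mono h _
  have hfW : ∀ m ∈ W, f ≤ m := by
    intro m hm
    rw [le_iff_ev]
    intro i hi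
    rw [hf i hi]
    split_ifs with h1 h2
    · subst h1
      have := hm i hk
      simp at this
      exact this
    · subst h2
      have := hm (k + 1) hi
      simp at this
      exact this
    · exact Nat.zero_le _
  have hcol : colonSet W f = edgeSet n fun i => if i < k + 2 then 0 else
      if i = k + 2 then c (k + 2) - c (k + 1) else c i := by
    ext m
    refine forall₂_congr fun i hi => ?_
    simp only [ev_add, hf i (by omega), hf (i + 1) hi]
    rcases lt_trichotomy i (k + 1) with h1 | h1 | h1
    · rcases Nat.lt_or_ge i k with h2 | h2
      · have := hc i h2
        simp [this, show i < k + 2 by omega]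
      · obtain rfl : i = k := by omega
        simp
    · subst h1
      simp [show ¬ k + 1 + 1 = k by omega]
    · by_cases h2 : i = k + 2
      · subst h2
        simp [show ¬ k + 2 + 1 = k by omega]
        omega
      · have e1 : ¬ i = k := by omega
        have e2 : ¬ i + 1 = k := by omega
        have e3 : ¬ i = k + 1 := by omega
        have e4 : ¬ i < k + 2 := by omega
        have e5 : ¬ i + 1 = k + 2 := by omega
        simp [h2, e1, e2, e3, e4]
  have hWI : W ∪ Set.Ici f = Set.Ici f := Set.union_eq_self_of_subset_left hfW
  have hWd : DepthGE K W (D + 1) :=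
    depthGE_of_colon hWup f (by rwa [hcol]) (by rw [hWI]; exact depthGE_Ici hD f)
  have hfree : ∀ m, m + Finsupp.single ⟨k + 1, hk⟩ 1 ∈ W → m ∈ W := by
    intro m hm i hi
    have := hm i hi
    simp only [ev_add, ev_single] at this
    split_ifs at this ⊢ <;> omega
  have hunion : W ∪ Set.Ici (Finsupp.single ⟨k + 1, hk⟩ 1) =
      edgeSet n c ∪ Set.Ici (Finsupp.single ⟨k + 1, hk⟩ 1) := by
    ext m
    simp only [Set.mem_union, Set.mem_Ici, single_le_iff_ev]
    by_cases h0 : 1 ≤ ev m (k + 1)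
    · simp [h0]
    · simp only [h0, or_false]
      refine forall₂_congr fun i hi => ?_
      have h0' : ev m (k + 1) = 0 := by omega
      split_ifs with h1 h2 h2
      · omega
      · subst h1
        rw [h0']
      · rw [h2, h0']
      · rfl
  rw [← hunion]
  exact (depthGE_succ_iff hWup _ hfree).1 hWd

/-- The basic recursion for the lower bounds, along the colon by the variable `k + 1`. -/
lemma depthGE_edgeSet_step {c : ℕ → ℕ} {k : ℕ} (hk : k + 1 < n) (hc : ∀ i < k, c i = 0) {D : ℕ}
    (hD : D + 2 ≤ n)
    (h : DepthGE K (edgeSet n fun i => if i < k + 2 then 0 else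
      if i = k + 2 then c (k + 2) - c (k + 1) else c i) (D + 1))
    (h' : DepthGE K (edgeSet n fun i => if i = k ∨ i = k + 1 then c i - 1 else c i) D) :
    DepthGE K (edgeSet n c) D := by
  refine depthGE_of_colon (isUpperSet_edgeSet c) (Finsupp.single ⟨k + 1, hk⟩ 1) ?_
    (depthGE_edgeSet_union hk hc hD h)
  rw [colonSet_edgeSet]
  convert h' using 2
  funext i
  simp only [ev_single]
  split_ifs <;> omega

/-- The function through which the depths are expressed: it grows by `t` over a period
`2 * t + 1`. -/
def halfGap (t x : ℕ) : ℕ := (x - x / (2 * t + 1)) / 2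

lemma halfGap_add_le (t x u : ℕ) : halfGap t (x + 2 * u) ≤ halfGap t x + u := by
  unfold halfGap
  have := Nat.div_le_div_right (c := 2 * t + 1) (Nat.le_add_right x (2 * u))
  omega

lemma halfGap_mono (t : ℕ) {x y : ℕ} (h : x ≤ y) : halfGap t x ≤ halfGap t y := by
  induction h with
  | refl => exact le_rfl
  | @step y _ ih =>
    refine ih.trans ?_
    unfold halfGap
    have h1 : (y + 1) / (2 * t + 1) ≤ y / (2 * t + 1) + 1 := by
      rw [Nat.succ_div]
      split_ifs <;> omega
    generalize (y + 1) / (2 * t + 1) = q' at *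
    generalize y / (2 * t + 1) = q at *
    omega

lemma halfGap_period (t x : ℕ) : halfGap t (x + (2 * t + 1)) = halfGap t x + t := by
  unfold halfGap
  rw [Nat.add_div_right _ (by omega)]
  have := Nat.div_le_self x (2 * t + 1)
  omega

lemma halfGap_small (t : ℕ) {x : ℕ} (h : x < 2 * t + 1) : halfGap t x = x / 2 := by
  unfold halfGap
  rw [Nat.div_eq_of_lt h, Nat.sub_zero]

/-- With `L` edges left, of which the first carries the weight `u ≤ t` and the others the weight
`t`, the projective dimension is at most `pdBound t L u + 1`. -/
def pdBound (t L u : ℕ) : ℕ := halfGap t (L + 1 + 2 * (t - u)) - (t - u)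

lemma le_halfGap (t L w : ℕ) (hw : w ≤ t) : w ≤ halfGap t (L + 1 + 2 * w) := by
  refine le_trans ?_ (halfGap_mono t (show 1 + 2 * w ≤ L + 1 + 2 * w by omega))
  rcases Nat.lt_or_ge w t with h | h
  · rw [halfGap_small t (by omega)]
    omega
  · obtain rfl : w = t := by omega
    have := halfGap_period w 0
    rw [show 0 + (2 * w + 1) = 1 + 2 * w by omega] at this
    omega

lemma pdBound_succ {t L u : ℕ} (hu : u ≤ t) : pdBound t L (t - u) ≤ pdBound t (L + 1) u := by
  unfold pdBound
  have e : t - (t - u) = u := by omega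
  rw [e]
  have h1 := halfGap_add_le t (L + 1 + 1 + 2 * (t - u)) u
  have h2 : L + 1 + 1 + 2 * (t - u) + 2 * u = L + 1 + (2 * t + 1) := by omega
  rw [h2, halfGap_period] at h1
  have h3 := halfGap_add_le t (L + 1) u
  omega

lemma pdBound_two {t L u v : ℕ} (hu : u ≤ t) (hv : v < u) :
    pdBound t (L - 2) v + 1 ≤ pdBound t L u ∨ L = 0 := by
  rcases Nat.lt_or_ge L 2 with hL | hL
  · rcases Nat.eq_zero_or_pos L with h | h
    · exact Or.inr h
    · left
      obtain rfl : L = 1 := by omega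
      unfold pdBound
      rw [halfGap_small t (x := 1 + 1 + 2 * (t - u)) (by omega)]
      have h3 := halfGap_add_le t (1 - 2 + 1) (t - v)
      have h4 : halfGap t (1 - 2 + 1) = 0 := by
        unfold halfGap
        generalize (1 - 2 + 1) / (2 * t + 1) = q
        omega
      omega
  · left
    unfold pdBound
    have h1 := halfGap_add_le t (L + 1 + 2 * (t - u)) (u - v - 1)
    have h2 : L + 1 + 2 * (t - u) + 2 * (u - v - 1) = L - 2 + 1 + 2 * (t - v) := by omega
    rw [h2] at h1
    have h3 := le_halfGap t (L - 2) (t - v) (by omega)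
    omega

/-- Lower bound for weight `u` on the edge `{k, k + 1}` and weight `t` on the later edges.
The colon by the variable `k + 1` lowers the weights of its two edges by one. After `u` such steps
the first edge has weight `0`, and the second one weight `t - u`: one edge fewer. At each step the
variable `k + 1` can instead be killed, which leaves a shift of an ideal with two edges fewer. -/
lemma depthGE_tail (t : ℕ) : ∀ L k u : ℕ, n - 1 - k = L → u ≤ t →
    DepthGE K (edgeSet n fun i => if i < k then 0 else if i = k then u else t)
      (n - 1 - pdBound t L u) := by
  intro L
  induction L using Nat.strong_induction_on with
  | _ L ihL =>
  intro k u hL hu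
  rcases Nat.lt_or_ge (k + 1) n with hk | hk
  swap
  · convert depthGE_univ (K := K) (n := n) _
    refine Set.eq_univ_of_forall fun m i hi => ?_
    simp [show i < k by omega]
  have key : ∀ v ≤ u, DepthGE K (edgeSet n fun i => if i < k then 0 else if i = k then v else
      if i = k + 1 then v + (t - u) else t) (n - 1 - pdBound t L u) := by
    intro v
    induction v with
    | zero =>
      intro _
      obtain ⟨L', rfl⟩ : ∃ L', L = L' + 1 := ⟨L - 1, by omega⟩
      have h := ihL L' (by omega) (k + 1) (t - u) (by omega) (by omega)
      have h2 := pdBound_succ (L := L') hu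
      convert h.mono (show n - 1 - pdBound t (L' + 1) u ≤ _ by omega) using 2
      funext i
      split_ifs <;> omega
    | succ v ihv =>
      intro hv
      have h1 := ihv (by omega)
      rcases Nat.eq_zero_or_pos (n - 1 - pdBound t L u) with h0 | h0
      · rw [h0]
        exact dep_zero _
      have hb := (pdBound_two (L := L) hu (show u - (v + 1) < u by omega)).resolve_right (by omega)
      have h2 := ihL (L - 2) (by omega) (k + 2) (u - (v + 1)) (by omega) (by omega)
      refine depthGE_edgeSet_step hk (fun i hi => by simp [hi]) (by omega) ?_ ?_
      · convert h2.mono (show n - 1 - pdBound t L u + 1 ≤ _ by omega) using 2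
        funext i
        split_ifs <;> omega
      · convert h1 using 2
        funext i
        split_ifs <;> omega
  convert key u le_rfl using 2
  funext i
  split_ifs <;> omega

/-- The lower bound for the depth of a power of the cover ideal. -/
lemma depthGE_path {t A : ℕ} (hn : n = 2 * A + 1) :
    DepthGE K (edgeSet n fun _ => t) (A + A / (2 * t + 1)) := by
  have h := depthGE_tail (K := K) (n := n) t (2 * A) 0 t (by omega) le_rfl
  have e : n - 1 - pdBound t (2 * A) t = A + A / (2 * t + 1) := by
    unfold pdBound halfGap
    have h1 := Nat.div_add_mod A (2 * t + 1)
    have h2 := Nat.mod_lt A (show 0 < 2 * t + 1 by omega)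
    set q := A / (2 * t + 1)
    set r := A % (2 * t + 1)
    have hq : q ≤ A := Nat.div_le_self _ _
    have h3 : (2 * A + 1) / (2 * t + 1) = 2 * q + (2 * r + 1) / (2 * t + 1) := by
      rw [show 2 * A + 1 = 2 * r + 1 + (2 * t + 1) * (2 * q) by rw [← h1]; ring,
        Nat.add_mul_div_left _ _ (by omega), add_comm]
    have h4 : (2 * r + 1) / (2 * t + 1) ≤ 1 := by
      have : (2 * r + 1) / (2 * t + 1) < 2 := (Nat.div_lt_iff_lt_mul (by omega)).2 (by omega)
      omega
    have h5 : t - t = 0 := Nat.sub_self t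
    rw [h5, mul_zero, add_zero, h3]
    clear_value q r
    generalize (2 * r + 1) / (2 * t + 1) = q' at *
    omega
  rw [← e]
  convert h using 2
  funext i
  split_ifs <;> omega

/-! ### The upper bound -/

/-- Let `S` be a set of edges of the path (an edge is named by its left end), no two of them
sharing a vertex. The quotient by `⋂ (x_i, x_{i+1})` over `i ∈ S` has depth exactly `n - 1 - |S|` when
`S` is nonempty. The upper bound splits off the first edge `{a, a + 1}`: a larger depth would, by the
Mayer–Vietoris bound, give too large a depth to the sum of `(x_a, x_{a+1})` and the ideal of the
other edges, and that sum has depth two less than the latter since the variables are disjoint. -/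
lemma depthGE_matching (S : Finset ℕ) : (∀ i ∈ S, i + 1 < n) → (∀ i ∈ S, i + 1 ∉ S) →
    DepthGE K (edgeSet n fun i => if i ∈ S then 1 else 0) (n - 1 - S.card) ∧
    (S.Nonempty → ¬ DepthGE K (edgeSet n fun i => if i ∈ S then 1 else 0) (n - S.card)) := by
  induction S using Finset.induction_on_min with
  | empty =>
    intro _ _
    refine ⟨?_, fun h => absurd h Finset.not_nonempty_empty⟩
    convert depthGE_univ (K := K) (n := n) _
    exact Set.eq_univ_of_forall fun m i hi => by simp
  | insert a S ha ih =>
    intro h1 h2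
    have haS : a ∉ S := fun h => lt_irrefl _ (ha a h)
    have hcard : (insert a S).card = S.card + 1 := Finset.card_insert_of_notMem haS
    have han : a + 1 < n := h1 a (Finset.mem_insert_self a S)
    have ha1 : a + 1 ∉ S := fun h => h2 a (Finset.mem_insert_self a S) (Finset.mem_insert_of_mem h)
    obtain ⟨ih1, ih2⟩ := ih (fun i hi => h1 i (Finset.mem_insert_of_mem hi))
      (fun i hi h => h2 i (Finset.mem_insert_of_mem hi) (Finset.mem_insert_of_mem h))
    have hgt : ∀ i ∈ S, a + 2 ≤ i := by
      intro i hi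
      have := ha i hi
      have : i ≠ a + 1 := fun h => ha1 (h ▸ hi)
      omega
    have hsub : S ⊆ Finset.Ico 1 (n - 1) := by
      intro i hi
      have := hgt i hi
      have := h1 i (Finset.mem_insert_of_mem hi)
      exact Finset.mem_Ico.2 (by omega)
    have hSn : S.card ≤ n - 2 := by
      have := Finset.card_le_card hsub
      rw [Nat.card_Ico] at this
      omega
    rw [hcard]
    constructor
    · rcases Nat.eq_zero_or_pos (n - 1 - (S.card + 1)) with h0 | h0
      · rw [h0]
        exact dep_zero _
      · refine depthGE_edgeSet_step han (fun i hi => ?_) (by omega) ?_ ?_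
        · have : i ∉ insert a S := by
            rw [Finset.mem_insert, not_or]
            exact ⟨by omega, fun h => by have := ha i h; omega⟩
          simp [this]
        · convert ih1.mono (show n - 1 - (S.card + 1) + 1 ≤ _ by omega) using 2
          funext i
          by_cases hi : i ∈ S
          · have := hgt i hi
            rcases eq_or_ne i (a + 2) with rfl | h
            · simp [hi, ha1]
            · simp [hi, h, show ¬ i < a + 2 by omega, show ¬ i = a by omega]
          · rcases Nat.lt_or_ge i (a + 2) with h | h
            · simp [hi, h]
            · rcases eq_or_ne i (a + 2) with rfl | h3
              · simp [hi]
              · simp [hi, h3, show ¬ i < a + 2 by omega, show ¬ i = a by omega]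
        · convert ih1.mono (show n - 1 - (S.card + 1) ≤ _ by omega) using 2
          funext i
          by_cases hi : i ∈ S
          · have := hgt i hi
            simp [hi, show ¬ i = a by omega, show ¬ i = a + 1 by omega]
          · by_cases h : i = a
            · simp [h, haS]
            · simp [hi, h]
    · intro _ h
      -- The ideal of the single edge `{a, a + 1}` is generated by two variables.
      set T : Finset (Fin n) := {⟨a, by omega⟩, ⟨a + 1, han⟩} with hT
      have hTc : T.card = 2 := by
        rw [hT, Finset.card_pair]
        simp
      obtain ⟨hT1, hT2⟩ := depthGE_vars (K := K) (n - 2) T (by omega)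
      have hTe : ∀ m : Fin n →₀ ℕ, (∃ i ∈ T, 0 < m i) ↔ 1 ≤ ev m a ∨ 1 ≤ ev m (a + 1) := by
        intro m
        have : a < n := by omega
        simp [hT, ev, han, this, Nat.one_le_iff_ne_zero, Nat.pos_iff_ne_zero]
      have hinter : edgeSet n (fun i => if i ∈ insert a S then 1 else 0) =
          edgeSet n (fun i => if i ∈ S then 1 else 0) ∩ {m | ∃ i ∈ T, 0 < m i} := by
        ext m
        simp only [Set.mem_inter_iff, Set.mem_ofPred_eq, hTe]
        constructor
        · intro hm
          refine ⟨fun i hi => ?_, ?_⟩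
          · refine le_trans ?_ (hm i hi)
            by_cases h : i ∈ S <;> simp [h]
          · have := hm a han
            simp at this
            omega
        · rintro ⟨hm, hm'⟩ i hi
          by_cases h : i = a
          · subst h
            simp
            omega
          · have := hm i hi
            simpa [h] using this
      rcases S.eq_empty_or_nonempty with rfl | hne
      · apply hT2
        have hu : edgeSet n (fun i => if i ∈ (∅ : Finset ℕ) then 1 else 0) = Set.univ :=
          Set.eq_univ_of_forall fun m i hi => by simp
        rw [hinter, hu, Set.univ_inter] at h
        exact h.mono (by simp; omega)
      · obtain ⟨k, hk⟩ : ∃ k, n - (S.card + 1) = k + 1 := ⟨n - (S.card + 1) - 1, by omega⟩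
        rw [hk, hinter] at h
        have hTup : IsUpperSet {m : Fin n →₀ ℕ | ∃ i ∈ T, 0 < m i} := by
          rintro m m' hmm ⟨i, hi, hmi⟩
          exact ⟨i, hi, hmi.trans_le (hmm i)⟩
        have hS := isUpperSet_edgeSet (n := n) fun i => if i ∈ S then 1 else 0
        have hun := depthGE_union hS hTup h (ih1.mono (by omega)) (hT1.mono (by omega))
        have hfree : ∀ j : Fin n, j.val ≤ a + 1 → ∀ m : Fin n →₀ ℕ,
            m + Finsupp.single j 1 ∈ edgeSet n (fun i => if i ∈ S then 1 else 0) →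
            m ∈ edgeSet n (fun i => if i ∈ S then 1 else 0) := by
          intro j hj m hm i hi
          by_cases h : i ∈ S
          · have h3 := hm i hi
            have h4 := hgt i h
            rw [ev_add, ev_add, ev_single, ev_single, if_neg (by omega), if_neg (by omega)] at h3
            exact h3
          · simp [h]
        have hun2 : edgeSet n (fun i => if i ∈ S then 1 else 0) ∪ {m | ∃ i ∈ T, 0 < m i} =
            (edgeSet n (fun i => if i ∈ S then 1 else 0) ∪
              Set.Ici (Finsupp.single ⟨a, by omega⟩ 1)) ∪
              Set.Ici (Finsupp.single ⟨a + 1, han⟩ 1) := by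
          rw [Set.union_assoc]
          congr 1
          ext m
          simp only [Set.mem_ofPred_eq, hTe, Set.mem_union, Set.mem_Ici, single_le_iff_ev]
        rw [hun2, ← depthGE_succ_iff (hS.union (isUpperSet_Ici _)), ← depthGE_succ_iff hS _
          (hfree _ (by simp))] at hun
        · exact ih2 hne (hun.mono (by omega))
        · rintro m (hm | hm)
          · exact Or.inl (hfree _ le_rfl m hm)
          · refine Or.inr ?_
            rw [Set.mem_Ici, single_le_iff_ev] at hm ⊢
            rw [ev_add, ev_single] at hm
            simpa using hm

/-- The number of `v < N` whose residue modulo `2 * t + 1` is even and not `2 * t`. -/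
lemma card_even_residue (t N : ℕ) :
    ((Finset.range N).filter fun v => v % (2 * t + 1) % 2 = 0 ∧ v % (2 * t + 1) < 2 * t).card =
      t * (N / (2 * t + 1)) + (N % (2 * t + 1) + 1) / 2 := by
  induction N with
  | zero => simp
  | succ N ih =>
    have hlt := Nat.mod_lt N (show 0 < 2 * t + 1 by omega)
    rw [Finset.range_add_one, Finset.filter_insert]
    have hdm := Nat.div_add_mod N (2 * t + 1)
    rcases Nat.lt_or_ge (N % (2 * t + 1)) (2 * t) with h | h
    · have e1 : (N + 1) / (2 * t + 1) = N / (2 * t + 1) := by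
        rw [Nat.succ_div, if_neg, add_zero]
        rw [Nat.dvd_iff_mod_eq_zero, Nat.add_mod, Nat.mod_eq_of_lt (a := 1) (by omega),
          Nat.mod_eq_of_lt (by omega)]
        omega
      have e2 : (N + 1) % (2 * t + 1) = N % (2 * t + 1) + 1 := by
        rw [Nat.add_mod, Nat.mod_eq_of_lt (a := 1) (by omega), Nat.mod_eq_of_lt (by omega)]
      rw [e1, e2]
      split_ifs with h1
      · rw [Finset.card_insert_of_notMem (by simp), ih]
        omega
      · rw [ih]
        omega
    · have e0 : N % (2 * t + 1) = 2 * t := by omega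
      have e1 : N + 1 = (2 * t + 1) * (N / (2 * t + 1) + 1) := by
        rw [mul_add, mul_one]
        omega
      rw [if_neg (by omega), ih, e0]
      rw [e1, Nat.mul_div_cancel_left _ (by omega), Nat.mul_mod_right, mul_add]
      omega

/-- The upper bound for the depth of a power of the cover ideal: a suitable colon is the ideal of
a matching, whose depth is known, and colons by monomials do not lower the depth. -/
lemma not_depthGE_path {t A : ℕ} (ht : 1 ≤ t) (hA : 1 ≤ A) (hn : n = 2 * A + 1) :
    ¬ DepthGE K (edgeSet n fun _ => t) (A + A / (2 * t + 1) + 1) := by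
  intro h
  -- Over one period of length `2 * t + 1` the entries of `a` are `0, t - 1, 1, t - 2, …, 0, t`:
  -- two consecutive ones add up to `t - 1` when the first position is even and less than `2 * t`,
  -- and to `t` otherwise. The colon thus has weight `1` on the former edges and `0` on the latter.
  set a : Fin n →₀ ℕ := ofFun fun v => if v % (2 * t + 1) % 2 = 0 then v % (2 * t + 1) / 2 else
    t - 1 - (v % (2 * t + 1) - 1) / 2
  set S := (Finset.range (2 * A)).filter
    fun v => v % (2 * t + 1) % 2 = 0 ∧ v % (2 * t + 1) < 2 * t with hS
  have hmod : ∀ v, (v % (2 * t + 1) < 2 * t ∧ (v + 1) % (2 * t + 1) = v % (2 * t + 1) + 1) ∨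
      (v % (2 * t + 1) = 2 * t ∧ (v + 1) % (2 * t + 1) = 0) := by
    intro v
    have hlt := Nat.mod_lt v (show 0 < 2 * t + 1 by omega)
    rcases Nat.lt_or_ge (v % (2 * t + 1)) (2 * t) with h | h
    · left
      refine ⟨h, ?_⟩
      rw [Nat.add_mod, Nat.mod_eq_of_lt (a := 1) (by omega), Nat.mod_eq_of_lt (by omega)]
    · right
      have h0 : v % (2 * t + 1) = 2 * t := by omega
      refine ⟨h0, ?_⟩
      rw [Nat.add_mod, h0, Nat.mod_eq_of_lt (a := 1) (by omega), Nat.mod_self]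
  have hcol : colonSet (edgeSet n fun _ => t) a = edgeSet n fun i => if i ∈ S then 1 else 0 := by
    rw [colonSet_edgeSet]
    refine edgeSet_congr fun i hi => ?_
    have hiS : i ∈ S ↔ i % (2 * t + 1) % 2 = 0 ∧ i % (2 * t + 1) < 2 * t := by
      rw [hS, Finset.mem_filter, Finset.mem_range]
      exact and_iff_right (by omega)
    simp only [hiS]
    rw [ev_ofFun _ (by omega), ev_ofFun _ hi]
    rcases hmod i with ⟨h1, h2⟩ | ⟨h1, h2⟩
    · rw [h2]
      split_ifs <;> omega
    · rw [h1, h2]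
      split_ifs <;> omega
  have h' := depthGE_colon a (isUpperSet_edgeSet _) h
  rw [hcol] at h'
  have hcard := card_even_residue t (2 * A)
  rw [← hS] at hcard
  have h1 := Nat.div_add_mod A (2 * t + 1)
  have h2 := Nat.mod_lt A (show 0 < 2 * t + 1 by omega)
  set q := A / (2 * t + 1)
  set r := A % (2 * t + 1)
  clear_value q r
  have hSc : S.card + q = A := by
    have e : 2 * A = 2 * r + (2 * t + 1) * (2 * q) := by rw [← h1]; ring
    rw [e, Nat.add_mul_div_left _ _ (by omega), Nat.add_mul_mod_self_left, mul_add] at hcard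
    have e2 : t * (2 * q) = 2 * (t * q) := by ring
    have e3 : (2 * t + 1) * q = 2 * (t * q) + q := by ring
    -- `2 * A` has quotient `2 * q` or `2 * q + 1` according to the size of the remainder `r`.
    rcases Nat.lt_or_ge t r with h3 | h3
    · have e4 : 2 * r = 2 * r - (2 * t + 1) + (2 * t + 1) := by omega
      rw [e4, Nat.add_div_right _ (by omega), Nat.add_mod_right,
        Nat.div_eq_of_lt (by omega), Nat.mod_eq_of_lt (by omega)] at hcard
      omega
    · rw [Nat.div_eq_of_lt (by omega), Nat.mod_eq_of_lt (by omega)] at hcard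
      omega
  refine (depthGE_matching (K := K) (n := n) S ?_ ?_).2 ?_ (h'.mono (by omega))
  · intro i hi
    rw [hS, Finset.mem_filter, Finset.mem_range] at hi
    omega
  · intro i hi hi'
    rw [hS, Finset.mem_filter] at hi hi'
    rcases hmod i with ⟨h1, h2⟩ | ⟨h1, h2⟩ <;> omega
  · exact ⟨0, by rw [hS, Finset.mem_filter, Finset.mem_range, Nat.zero_mod]; omega⟩

end Path

/-- Uniform formula for odd paths: if `n ≥ 3` is odd, `A = (n - 1)/2`, and `t ≥ 1`
satisfies `2t + 1 ≤ n - 2`, then `depth(R/J(P_n)^t) = A + ⌊A/(2t + 1)⌋`. -/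
theorem depth_coverIdeal_pow_odd_path (K : Type*) [Field K] (n t A : ℕ)
    (hn : 3 ≤ n) (hodd : Odd n) (hA : A = (n - 1) / 2) (ht1 : 1 ≤ t)
    (ht2 : 2 * t + 1 ≤ n - 2) :
    depthQuot K n ((coverIdeal K (SimpleGraph.pathGraph n)) ^ t)
      = A + A / (2 * t + 1) := by
  have hnA : n = 2 * A + 1 := by
    obtain ⟨b, rfl⟩ := hodd
    omega
  have hconst : ∀ p ∈ monIdeal K (edgeSet n fun _ => t), constantCoeff p = 0 := by
    intro p hp
    rw [mem_monIdeal (isUpperSet_edgeSet _)] at hp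
    by_contra h
    have : t ≤ _ := hp 0 h 0 (by omega)
    simp [ev] at this
    omega
  have hmax : ∀ p ∈ maxIdeal K n, constantCoeff p = 0 := by
    intro p hp
    have : maxIdeal K n ≤ RingHom.ker (constantCoeff (R := K) (σ := Fin n)) := by
      refine Ideal.span_le.2 ?_
      rintro _ ⟨i, rfl⟩
      simp [RingHom.mem_ker]
    exact this hp
  rw [depthQuot, coverIdeal_path_pow]
  refine IsGreatest.csSup_eq ⟨?_, ?_⟩
  · obtain ⟨rs, hlen, hrs, hreg⟩ := (Kos.dep_iff_exists_isWeaklyRegular _ _ _).1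
      (depthGE_path (K := K) (t := t) hnA)
    rw [ofList_varList] at hrs
    refine ⟨rs, hlen, hrs, hreg, fun htop => ?_⟩
    -- Otherwise `1` would be in the sum of two ideals of polynomials without constant term.
    have hle : Ideal.ofList rs • (⊤ : Submodule (MvPolynomial (Fin n) K)
        (MvPolynomial (Fin n) K ⧸ monIdeal K (edgeSet n fun _ => t))) ≤
        Submodule.map (Submodule.mkQ (monIdeal K (edgeSet n fun _ => t))) (maxIdeal K n) := by
      refine Submodule.smul_le.2 fun r hr y _ => ?_
      obtain ⟨p, rfl⟩ := Submodule.Quotient.mk_surjective _ y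
      have hr' : r ∈ maxIdeal K n := (Ideal.span_le (s := {r | r ∈ rs})).2 hrs hr
      exact ⟨r * p, Ideal.mul_mem_right _ _ hr', rfl⟩
    rw [← htop] at hle
    obtain ⟨p, hp, hp1⟩ := hle (show Submodule.Quotient.mk 1 ∈ ⊤ from trivial)
    have h1 := hconst _ ((Submodule.Quotient.eq _).1 hp1)
    rw [map_sub, hmax p hp, map_one] at h1
    simp at h1
  · rintro d ⟨rs, hlen, hrs, hreg⟩
    by_contra! hd
    have hdep : DepthGE K (edgeSet n fun _ => t) d :=
      (Kos.dep_iff_exists_isWeaklyRegular _ _ _).2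
        ⟨rs, hlen, by rwa [ofList_varList], hreg.toIsWeaklyRegular⟩
    exact not_depthGE_path ht1 (by omega) hnA (hdep.mono hd)
end
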